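/- arXiv:2408.12931 — 2 statements merged into one kernel-verified Lean document; each statement's English description precedes it below -/
import Mathlib

section
/- For every exp-edit sequence K from ℝ⁺-exponent-string u to ℝ⁺-exponent-string v, there exists an exp-matching E from u to v with cost(E) ≤ W(K). Hence the infimum of exp-matching costs is at most the infimum of exp-edit sequence costs, and combined with the reverse inequality the two infima coincide. -/
namespace ExpStr

variable {α S : Type*}

/-- Concatenation of exponent-string representations, merging the boundary
terms when the base characters coincide. -/
def eCat [DecidableEq α] (op : S → S → S) (p q : List (α × S)) : List (α × S) :=
  match p.getLast?, q with
  | some (a, s), (b, t) :: q' =>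
      if a = b then p.dropLast ++ (a, op s t) :: q' else p ++ q
  | _, _ => p ++ q

/-- The defining property of an `S`-exponent-string:
consecutive base characters differ. -/
def IsExp (l : List (α × S)) : Prop := l.Chain' (fun x y => x.1 ≠ y.1)

/-- The exponent-string corresponding to a representation. -/
def eRep [DecidableEq α] (op : S → S → S) : List (α × S) → List (α × S)
  | [] => []
  | x :: xs => eCat op [x] (eRep op xs)

end ExpStr

noncomputable section
namespace ExpStr
open MeasureTheory

variable {α : Type*}

/-- Length of an `ℝ⁺`-exponent-string: the sum of its exponents. -/
def eLen (l : List (α × ℝ)) : ℝ := (l.map Prod.snd).sum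

/-- `ℝ⁺`-exponent-strings: consecutive base characters differ and all
exponents are positive reals. -/
def RES (l : List (α × ℝ)) : Prop := IsExp l ∧ ∀ x ∈ l, 0 < x.2

/-- Concatenation of `ℝ⁺`-exponent-strings (exponents added at the boundary). -/
def rcat [DecidableEq α] (p q : List (α × ℝ)) : List (α × ℝ) :=
  eCat (· + ·) p q

/-- The `ℕ`-exponent-string (run-length encoding) corresponding to a word. -/
def ofWord [DecidableEq α] (w : List α) : List (α × ℝ) :=
  eRep (· + ·) (w.map fun a => (a, (1 : ℝ)))

/-- Multiply every exponent by `k`. -/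
def scaleE (k : ℝ) (l : List (α × ℝ)) : List (α × ℝ) :=
  l.map fun x => (x.1, k * x.2)

/-- The base character of the position `x` in an `ℝ⁺`-exponent-string. -/
def charAt [Inhabited α] : List (α × ℝ) → ℝ → α
  | [], _ => default
  | (a, s) :: t, x => if x < s then a else charAt t (x - s)

/-- A single exp-edit operation applied to an infix, with its cost:
insertion `λ → a^q`, deletion `a^q → λ`, or substitution `a^q → b^q`. -/
def Step [DecidableEq α] (wdel wins : α → ℝ) (wsub : α → α → ℝ)
    (u v : List (α × ℝ)) (c : ℝ) : Prop :=
  ∃ p₁ p₂ : List (α × ℝ), RES p₁ ∧ RES p₂ ∧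
    ((∃ a q, 0 < q ∧ u = rcat p₁ p₂ ∧ v = rcat p₁ (rcat [(a, q)] p₂) ∧
        c = q * wins a) ∨
     (∃ a q, 0 < q ∧ u = rcat p₁ (rcat [(a, q)] p₂) ∧ v = rcat p₁ p₂ ∧
        c = q * wdel a) ∨
     (∃ a b q, 0 < q ∧ u = rcat p₁ (rcat [(a, q)] p₂) ∧
        v = rcat p₁ (rcat [(b, q)] p₂) ∧ c = q * wsub a b))

/-- `EditCost wdel wins wsub u v c` holds iff there is a finite exp-edit
sequence from `u` to `v` of total cost `c`. -/
inductive EditCost [DecidableEq α] (wdel wins : α → ℝ) (wsub : α → α → ℝ)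
    (u : List (α × ℝ)) : List (α × ℝ) → ℝ → Prop
  | refl : EditCost wdel wins wsub u u 0
  | step {p q : List (α × ℝ)} {c c' : ℝ} :
      EditCost wdel wins wsub u p c → Step wdel wins wsub p q c' →
      EditCost wdel wins wsub u q (c + c')

/-- Exp-edit distance: the infimum cost of exp-edit sequences. -/
def eDist [DecidableEq α] (wdel wins : α → ℝ) (wsub : α → α → ℝ)
    (u v : List (α × ℝ)) : ℝ :=
  sInf {c | EditCost wdel wins wsub u v c}

/-- Exp-edit sequences all of whose intermediate terms satisfy `P`. -/
inductive EditCostIn [DecidableEq α] (P : List (α × ℝ) → Prop)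
    (wdel wins : α → ℝ) (wsub : α → α → ℝ)
    (u : List (α × ℝ)) : List (α × ℝ) → ℝ → Prop
  | refl : EditCostIn P wdel wins wsub u u 0
  | step {p q : List (α × ℝ)} {c c' : ℝ} :
      EditCostIn P wdel wins wsub u p c → Step wdel wins wsub p q c' → P q →
      EditCostIn P wdel wins wsub u q (c + c')

/-- All exponents are positive integers. -/
def IntExp (l : List (α × ℝ)) : Prop := ∀ x ∈ l, ∃ n : ℕ, x.2 = n

/-- All exponents are (positive) rationals. -/
def RatExp (l : List (α × ℝ)) : Prop := ∀ x ∈ l, ∃ r : ℚ, x.2 = r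

/-- A single classical string edit operation with its cost. -/
def SStep (wdel wins : α → ℝ) (wsub : α → α → ℝ) (u v : List α) (c : ℝ) : Prop :=
  ∃ p₁ p₂ : List α,
    ((∃ a, u = p₁ ++ p₂ ∧ v = p₁ ++ a :: p₂ ∧ c = wins a) ∨
     (∃ a, u = p₁ ++ a :: p₂ ∧ v = p₁ ++ p₂ ∧ c = wdel a) ∨
     (∃ a b, u = p₁ ++ a :: p₂ ∧ v = p₁ ++ b :: p₂ ∧ c = wsub a b))

/-- Total costs of classical string edit sequences. -/
inductive SEditCost (wdel wins : α → ℝ) (wsub : α → α → ℝ) (u : List α) :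
    List α → ℝ → Prop
  | refl : SEditCost wdel wins wsub u u 0
  | step {p q : List α} {c c' : ℝ} :
      SEditCost wdel wins wsub u p c → SStep wdel wins wsub p q c' →
      SEditCost wdel wins wsub u q (c + c')

/-- Classical string edit distance. -/
def sDist (wdel wins : α → ℝ) (wsub : α → α → ℝ) (u v : List α) : ℝ :=
  sInf {c | SEditCost wdel wins wsub u v c}

/-- X-projection of a diagonal segment `(x₀, y₀, t)`. -/
def mSegX (m : ℝ × ℝ × ℝ) : Set ℝ := Set.Ico m.1 (m.1 + m.2.2)

/-- Y-projection of a diagonal segment `(x₀, y₀, t)`. -/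
def mSegY (m : ℝ × ℝ × ℝ) : Set ℝ := Set.Ico m.2.1 (m.2.1 + m.2.2)

/-- X-projection of a matching. -/
def mEX (M : List (ℝ × ℝ × ℝ)) : Set ℝ := ⋃ m ∈ M, mSegX m

/-- Y-projection of a matching. -/
def mEY (M : List (ℝ × ℝ × ℝ)) : Set ℝ := ⋃ m ∈ M, mSegY m

/-- An exp-matching: a finite family of diagonal segments, each given as
`(x₀, y₀, t)` (start point and length parameter), lying in `[0,L₁)×[0,L₂)`,
with pairwise disjoint axis projections, and monotone. -/
def IsMatching (L₁ L₂ : ℝ) (M : List (ℝ × ℝ × ℝ)) : Prop :=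
  (∀ m ∈ M, 0 < m.2.2 ∧ 0 ≤ m.1 ∧ 0 ≤ m.2.1 ∧
      m.1 + m.2.2 ≤ L₁ ∧ m.2.1 + m.2.2 ≤ L₂) ∧
  M.Pairwise (fun m m' =>
      Disjoint (mSegX m) (mSegX m') ∧ Disjoint (mSegY m) (mSegY m')) ∧
  (∀ m ∈ M, ∀ m' ∈ M, ∀ s s' : ℝ, 0 ≤ s → s < m.2.2 → 0 ≤ s' → s' < m'.2.2 →
      m.1 + s < m'.1 + s' → m.2.1 + s ≤ m'.2.1 + s')

/-- Cost of an exp-matching: deletion and insertion integrals over the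
unmatched positions plus the substitution (arc-length) integral over the
segments (the factor `1/√2` cancels the speed `√2` of the parametrization). -/
def mCost [Inhabited α] (wdel wins : α → ℝ) (wsub : α → α → ℝ)
    (p₁ p₂ : List (α × ℝ)) (M : List (ℝ × ℝ × ℝ)) : ℝ :=
  (∫ x in Set.Ico 0 (eLen p₁) \ mEX M, wdel (charAt p₁ x)) +
  (∫ y in Set.Ico 0 (eLen p₂) \ mEY M, wins (charAt p₂ y)) +
  (M.map fun m => ∫ s in (0 : ℝ)..m.2.2,
      wsub (charAt p₁ (m.1 + s)) (charAt p₂ (m.2.1 + s))).sum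

end ExpStr
end

/-!
Edit sequences and matchings are compared through *alignments*: finite lists of columns
`(x, y, q)` with `x`, `y` a character or `λ` (encoded as `none`) and a width `q > 0`, putting `x ^ q`
above `y ^ q`. The weight of an alignment is the sum of `q * w (x → y)`. Its rows need not be in
normal form, so strings are compared by length and by the character at each position (`Eqv`), which
determines an exponent-string (`Eqv.eq`).

* An edit sequence gives an alignment of no larger weight (`align_of_edit`). An alignment from `u` to
  `p` is composed with one edit `p → q` by cutting its columns at the ends of the edited infix of `p`
  and relabelling the lower characters in between; the triangle inequality bounds the new weight
  (`align_step`).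
* An alignment gives an edit sequence of the same weight, one column at a time (`edit_of_align`).
* An alignment gives a matching of the same cost, consisting of the columns without `λ`
  (`matching_of_align`). Conversely the segments of a matching, sorted from left to right, cut both
  strings into pieces that are deleted, inserted, or matched with a piece of the same length, and the
  latter can be subdivided into columns (`align_of_sorted`).

The costs in the last item are compared after rewriting both as the cost of deleting all of `u` and
inserting all of `v`, plus the sum over the matched part of `wsub a b - wdel a - wins b`
(`mCost_eq`, `acost_eq`); this removes the integrals over the uncovered positions.
-/

namespace ExpStr
open MeasureTheory

variable {α : Type*}

/-- All terms of a list have positive exponent. -/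
def Pos (l : List (α × ℝ)) : Prop := ∀ x ∈ l, 0 < x.2

/-! ### Exponent-strings as functions of the position -/

lemma eLen_nil : eLen ([] : List (α × ℝ)) = 0 := rfl

lemma eLen_cons (x : α × ℝ) (l : List (α × ℝ)) : eLen (x :: l) = x.2 + eLen l := by
  simp [eLen]

lemma eLen_append (p q : List (α × ℝ)) : eLen (p ++ q) = eLen p + eLen q := by
  simp [eLen]

lemma pos_cons {x : α × ℝ} {l : List (α × ℝ)} : Pos (x :: l) ↔ 0 < x.2 ∧ Pos l := by
  simp [Pos]

lemma pos_append {p q : List (α × ℝ)} : Pos (p ++ q) ↔ Pos p ∧ Pos q := by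
  simp only [Pos, List.mem_append]
  exact ⟨fun h => ⟨fun x hx => h x (.inl hx), fun x hx => h x (.inr hx)⟩,
    fun h x hx => hx.elim (h.1 x) (h.2 x)⟩

lemma pos_nil : Pos ([] : List (α × ℝ)) := by simp [Pos]

lemma Pos.eLen_nonneg {l : List (α × ℝ)} (h : Pos l) : 0 ≤ eLen l := by
  induction l with
  | nil => simp [eLen_nil]
  | cons x l ih =>
    rw [pos_cons] at h
    rw [eLen_cons]
    linarith [ih h.2]

lemma res_single {a : α} {q : ℝ} (hq : 0 < q) : RES [(a, q)] := by
  simp [RES, IsExp, List.Chain', hq]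

lemma res_nil : RES ([] : List (α × ℝ)) := by
  simp [RES, IsExp, List.Chain']

section Eqv
variable [Inhabited α]

lemma charAt_append {p : List (α × ℝ)} (hp : Pos p) (q : List (α × ℝ)) {x : ℝ} (hx : 0 ≤ x) :
    charAt (p ++ q) x = if x < eLen p then charAt p x else charAt q (x - eLen p) := by
  induction p generalizing x with
  | nil => simp [eLen_nil, not_lt.2 hx]
  | cons y p ih =>
    obtain ⟨a, s⟩ := y
    rw [pos_cons] at hp
    have := hp.2.eLen_nonneg
    rw [eLen_cons]
    simp only [List.cons_append, charAt]
    by_cases h : x < s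
    · simp [h, show x < s + eLen p by linarith]
    · rw [if_neg h, if_neg h, ih hp.2 (by linarith)]
      simp only [sub_sub, sub_lt_iff_lt_add']

lemma charAt_append_left {p : List (α × ℝ)} (hp : Pos p) (q : List (α × ℝ)) {x : ℝ}
    (hx : 0 ≤ x) (h : x < eLen p) : charAt (p ++ q) x = charAt p x := by
  rw [charAt_append hp q hx, if_pos h]

lemma charAt_append_right {p : List (α × ℝ)} (hp : Pos p) (q : List (α × ℝ)) {x : ℝ}
    (hx : 0 ≤ x) : charAt (p ++ q) (eLen p + x) = charAt q x := by
  rw [charAt_append hp q (by linarith [hp.eLen_nonneg]), if_neg (by linarith)]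
  simp

lemma charAt_of_ge {l : List (α × ℝ)} (hl : Pos l) {x : ℝ} (h : eLen l ≤ x) :
    charAt l x = default := by
  induction l generalizing x with
  | nil => rfl
  | cons y l ih =>
    obtain ⟨a, s⟩ := y
    rw [pos_cons] at hl
    rw [eLen_cons] at h
    have := hl.2.eLen_nonneg
    simp only [charAt] at h ⊢
    rw [if_neg (by linarith), ih hl.2 (by linarith)]

/-- Two lists of terms represent the same exponent-string: they have the same length and the same
character at every position. Past its length a list of positive terms has the default character,
so comparing at all `x ≥ 0` loses nothing. -/
def Eqv (l l' : List (α × ℝ)) : Prop :=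
  eLen l = eLen l' ∧ ∀ x, 0 ≤ x → charAt l x = charAt l' x

lemma Eqv.refl (l : List (α × ℝ)) : Eqv l l := ⟨rfl, fun _ _ => rfl⟩

lemma Eqv.symm {l l' : List (α × ℝ)} (h : Eqv l l') : Eqv l' l :=
  ⟨h.1.symm, fun x hx => (h.2 x hx).symm⟩

lemma Eqv.trans {l l' l'' : List (α × ℝ)} (h : Eqv l l') (h' : Eqv l' l'') : Eqv l l'' :=
  ⟨h.1.trans h'.1, fun x hx => (h.2 x hx).trans (h'.2 x hx)⟩

lemma Eqv.append {p p' q q' : List (α × ℝ)} (hp : Pos p) (hp' : Pos p')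
    (h : Eqv p p') (h' : Eqv q q') : Eqv (p ++ q) (p' ++ q') := by
  refine ⟨by rw [eLen_append, eLen_append, h.1, h'.1], fun x hx => ?_⟩
  rw [charAt_append hp q hx, charAt_append hp' q' hx, h.1, h.2 x hx]
  split_ifs with h1
  · rfl
  · exact h'.2 _ (by linarith)

lemma Eqv.cancel {p p' q q' : List (α × ℝ)} (hp : Pos p) (hp' : Pos p')
    (h : Eqv (p ++ q) (p' ++ q')) (hl : eLen p = eLen p') : Eqv p p' ∧ Eqv q q' := by
  have h1 := h.1
  rw [eLen_append, eLen_append] at h1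
  refine ⟨⟨hl, fun x hx => ?_⟩, by linarith, fun x hx => ?_⟩
  · by_cases hxl : x < eLen p
    · rw [← charAt_append_left hp q hx hxl, h.2 x hx, charAt_append_left hp' q' hx (hl ▸ hxl)]
    · rw [charAt_of_ge hp (not_lt.1 hxl), charAt_of_ge hp' (hl ▸ not_lt.1 hxl)]
  · rw [← charAt_append_right hp q hx, h.2 _ (by linarith [hp.eLen_nonneg]), hl,
      charAt_append_right hp' q' hx]

lemma charAt_const {l : List (α × ℝ)} {a : α} (h : ∀ y ∈ l, y.1 = a)
    {x : ℝ} (hxl : x < eLen l) (hx : 0 ≤ x) : charAt l x = a := by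
  induction l generalizing x with
  | nil => rw [eLen_nil] at hxl; linarith
  | cons y l ih =>
    obtain ⟨b, s⟩ := y
    rw [eLen_cons] at hxl
    simp only [List.mem_cons, forall_eq_or_imp] at h
    simp only [charAt] at hxl ⊢
    split_ifs with h1
    · exact h.1
    · exact ih h.2 (by linarith) (by linarith)

lemma eqv_const {l : List (α × ℝ)} {a : α} {q : ℝ} (hl : Pos l) (h : ∀ y ∈ l, y.1 = a)
    (hq : eLen l = q) : Eqv l [(a, q)] := by
  refine ⟨by simp [eLen_cons, eLen_nil, hq], fun x hx => ?_⟩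
  simp only [charAt]
  split_ifs with h1
  · exact charAt_const h (hq ▸ h1) hx
  · exact charAt_of_ge hl (hq ▸ not_lt.1 h1)

lemma const_of_charAt {l : List (α × ℝ)} (hl : Pos l) {a : α}
    (h : ∀ x, 0 ≤ x → x < eLen l → charAt l x = a) : ∀ y ∈ l, y.1 = a := by
  induction l with
  | nil => simp
  | cons y l ih =>
    obtain ⟨b, s⟩ := y
    rw [pos_cons] at hl
    have hn := hl.2.eLen_nonneg
    have hs : 0 < s := hl.1
    simp only [eLen_cons, charAt] at h
    simp only [List.mem_cons, forall_eq_or_imp]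
    refine ⟨by simpa [hs] using h 0 le_rfl (by linarith), ih hl.2 fun x hx hxl => ?_⟩
    have := h (s + x) (by linarith) (by linarith)
    rwa [if_neg (by linarith), add_sub_cancel_left] at this

/-- An exponent-string is determined by its length and its characters, since consecutive characters
differ. -/
lemma Eqv.eq {l l' : List (α × ℝ)} (hl : RES l) (hl' : RES l') (h : Eqv l l') : l = l' := by
  induction l generalizing l' with
  | nil =>
    cases l' with
    | nil => rfl
    | cons y l' =>
      have h1 := h.1
      have := pos_cons.1 hl'.2
      have h2 := this.2.eLen_nonneg
      rw [eLen_nil, eLen_cons] at h1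
      linarith [this.1]
  | cons y l ih =>
    obtain ⟨a, s⟩ := y
    have p := pos_cons.1 hl.2
    have p2 := p.2.eLen_nonneg
    cases l' with
    | nil =>
      have h1 := h.1
      rw [eLen_nil, eLen_cons] at h1
      linarith [p.1]
    | cons y l' =>
      obtain ⟨b, t⟩ := y
      have p' := pos_cons.1 hl'.2
      have p2' := p'.2.eLen_nonneg
      have h1 := h.1
      have h0 := h.2 0 le_rfl
      simp only [eLen_cons, charAt] at h1 h0 p p'
      rw [if_pos p.1, if_pos p'.1] at h0
      subst h0
      -- If the first terms had different lengths, the end of the shorter one would be followed by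
      -- the same character, which the chain condition forbids.
      have key : ∀ {l l' : List (α × ℝ)} {s t : ℝ}, RES ((a, s) :: l) → Pos ((a, t) :: l') →
          Eqv ((a, s) :: l) ((a, t) :: l') → ¬ s < t := by
        intro l l' s t hl hl' h hst
        have hp' := pos_cons.1 hl'
        have hp'2 := hp'.2.eLen_nonneg
        have hp := pos_cons.1 hl.2
        have h1 := h.1
        have h2 := h.2 s hp.1.le
        simp only [eLen_cons, charAt] at h1 h2
        rw [if_neg (lt_irrefl _), if_pos hst, sub_self] at h2
        cases l with
        | nil => rw [eLen_nil] at h1; linarith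
        | cons z l =>
          have hz := (pos_cons.1 hp.2).1
          have hc := hl.1
          simp only [IsExp, List.Chain'] at hc
          rw [List.isChain_cons_cons] at hc
          obtain ⟨c, r⟩ := z
          simp only [charAt] at h2 hz
          rw [if_pos hz] at h2
          exact hc.1 h2.symm
      have hst : s = t := le_antisymm (not_lt.1 (key hl' hl.2 h.symm)) (not_lt.1 (key hl hl'.2 h))
      subst hst
      have := Eqv.cancel (p := [(a, s)]) (p' := [(a, s)]) (q := l) (q' := l')
        (by simp [Pos, p.1]) (by simp [Pos, p.1]) h rfl
      rw [show l = l' from ih ⟨hl.1.tail, p.2⟩ ⟨hl'.1.tail, p'.2⟩ this.2]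

variable [DecidableEq α]

lemma rcat_spec {p q : List (α × ℝ)} (hp : RES p) (hq : RES q) :
    RES (rcat p q) ∧ Eqv (rcat p q) (p ++ q) := by
  rcases List.eq_nil_or_concat p with rfl | ⟨p, ⟨a, s⟩, rfl⟩
  · simpa [rcat, eCat, hq] using Eqv.refl q
  rw [List.concat_eq_append] at hp ⊢
  cases q with
  | nil => simpa [rcat, eCat] using ⟨hp, Eqv.refl _⟩
  | cons y q =>
    obtain ⟨b, t⟩ := y
    have hp2 := pos_append.1 hp.2
    have hq2 := pos_cons.1 hq.2
    have hs := (pos_cons.1 hp2.2).1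
    have chain : ∀ l : List (α × ℝ), IsExp l ↔ (l.map Prod.fst).IsChain (· ≠ ·) := fun l =>
      (List.isChain_map _).symm
    have hpc := (chain _).1 hp.1
    have hqc := (chain _).1 hq.1
    simp only [List.map_append, List.map_cons, List.map_nil] at hpc hqc
    by_cases hab : a = b
    · subst hab
      have e : rcat (p ++ [(a, s)]) ((a, t) :: q) = p ++ (a, s + t) :: q := by
        simp [rcat, eCat]
      have hst : 0 < s + t := add_pos hs hq2.1
      rw [e]
      refine ⟨⟨(chain _).2 ?_, pos_append.2 ⟨hp2.1, pos_cons.2 ⟨hst, hq2.2⟩⟩⟩, ?_⟩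
      · simp only [List.map_append, List.map_cons]
        exact List.isChain_split.2 ⟨hpc, hqc⟩
      · rw [List.append_assoc]
        refine (Eqv.refl p).append hp2.1 hp2.1 ?_
        have : Eqv [(a, s), (a, t)] [(a, s + t)] := by
          refine eqv_const ?_ (by simp) (by simp [eLen_cons, eLen_nil])
          simpa [Pos] using ⟨hs, hq2.1⟩
        exact this.symm.append (p := [(a, s + t)]) (p' := [(a, s), (a, t)])
          (by simpa [Pos] using hst) (by simpa [Pos] using ⟨hs, hq2.1⟩) (Eqv.refl q)
    · have e : rcat (p ++ [(a, s)]) ((b, t) :: q) = (p ++ [(a, s)]) ++ (b, t) :: q := by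
        simp [rcat, eCat, hab]
      rw [e]
      refine ⟨⟨(chain _).2 ?_, pos_append.2 ⟨hp.2, hq.2⟩⟩, Eqv.refl _⟩
      simp only [List.map_append, List.map_cons, List.append_assoc,
        List.cons_append, List.nil_append]
      rw [List.isChain_append_cons_cons]
      exact ⟨hpc, hab, hqc⟩

lemma exists_res {l : List (α × ℝ)} (hl : Pos l) : ∃ p, RES p ∧ Eqv p l := by
  induction l with
  | nil => exact ⟨[], res_nil, Eqv.refl _⟩
  | cons y l ih =>
    have h := pos_cons.1 hl
    obtain ⟨p, hp, hpl⟩ := ih h.2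
    have hy : Pos [y] := by simpa [Pos] using h.1
    have := rcat_spec (res_single (a := y.1) h.1) hp
    exact ⟨_, this.1, this.2.trans ((Eqv.refl [y]).append hy hy hpl)⟩

lemma rcat_rcat_spec {p x r : List (α × ℝ)} (hp : RES p) (hx : RES x) (hr : RES r) :
    RES (rcat p (rcat x r)) ∧ Eqv (rcat p (rcat x r)) (p ++ (x ++ r)) := by
  have h := rcat_spec hx hr
  have h' := rcat_spec hp h.1
  exact ⟨h'.1, h'.2.trans ((Eqv.refl p).append hp.2 hp.2 h.2)⟩

end Eqv

/-! ### Alignments -/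

/-- The power `x ^ q`, where `none` stands for the empty string `λ`. -/
def pw (x : Option α) (q : ℝ) : List (α × ℝ) := x.toList.map fun a => (a, q)

/-- The weight of replacing one character or `λ` by another; `none` stands for `λ`. -/
def wt (wdel wins : α → ℝ) (wsub : α → α → ℝ) : Option α → Option α → ℝ
  | none, none => 0
  | some a, none => wdel a
  | none, some b => wins b
  | some a, some b => wsub a b

/-- The upper row of an alignment. An alignment is a list of columns `(x, y, q)`, which put `x ^ q`
above `y ^ q`. -/
def top (A : List (Option α × Option α × ℝ)) : List (α × ℝ) := A.flatMap fun m => pw m.1 m.2.2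

/-- The lower row of an alignment. -/
def bot (A : List (Option α × Option α × ℝ)) : List (α × ℝ) := A.flatMap fun m => pw m.2.1 m.2.2

/-- The total weight of an alignment, for a given weight of pairs. -/
def acost (w : Option α → Option α → ℝ) (A : List (Option α × Option α × ℝ)) : ℝ :=
  (A.map fun m => m.2.2 * w m.1 m.2.1).sum

/-- All columns of an alignment have positive width. -/
def CPos (A : List (Option α × Option α × ℝ)) : Prop := ∀ m ∈ A, 0 < m.2.2

lemma top_nil : top ([] : List (Option α × Option α × ℝ)) = [] := rfl

lemma bot_nil : bot ([] : List (Option α × Option α × ℝ)) = [] := rfl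

lemma top_cons (m : Option α × Option α × ℝ) (A : List (Option α × Option α × ℝ)) :
    top (m :: A) = pw m.1 m.2.2 ++ top A := by simp [top]

lemma bot_cons (m : Option α × Option α × ℝ) (A : List (Option α × Option α × ℝ)) :
    bot (m :: A) = pw m.2.1 m.2.2 ++ bot A := by simp [bot]

lemma top_append (A B : List (Option α × Option α × ℝ)) : top (A ++ B) = top A ++ top B := by
  simp [top]

lemma bot_append (A B : List (Option α × Option α × ℝ)) : bot (A ++ B) = bot A ++ bot B := by
  simp [bot]

lemma acost_nil (w : Option α → Option α → ℝ) : acost w [] = 0 := rfl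

lemma acost_cons (w : Option α → Option α → ℝ) (m : Option α × Option α × ℝ)
    (A : List (Option α × Option α × ℝ)) : acost w (m :: A) = m.2.2 * w m.1 m.2.1 + acost w A := by
  simp [acost]

lemma acost_append (w : Option α → Option α → ℝ) (A B : List (Option α × Option α × ℝ)) :
    acost w (A ++ B) = acost w A + acost w B := by simp [acost]

lemma cpos_cons {m : Option α × Option α × ℝ} {A : List (Option α × Option α × ℝ)} :
    CPos (m :: A) ↔ 0 < m.2.2 ∧ CPos A := by simp [CPos]

lemma cpos_nil : CPos ([] : List (Option α × Option α × ℝ)) := by simp [CPos]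

lemma cpos_append {A B : List (Option α × Option α × ℝ)} :
    CPos (A ++ B) ↔ CPos A ∧ CPos B := by
  simp only [CPos, List.mem_append]
  exact ⟨fun h => ⟨fun x hx => h x (.inl hx), fun x hx => h x (.inr hx)⟩,
    fun h x hx => hx.elim (h.1 x) (h.2 x)⟩

lemma pw_none (q : ℝ) : pw (none : Option α) q = [] := rfl

lemma pw_some (a : α) (q : ℝ) : pw (some a) q = [(a, q)] := rfl

lemma pos_pw (x : Option α) {q : ℝ} (hq : 0 < q) : Pos (pw x q) := by
  cases x <;> simp [pw, Pos, hq]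

lemma CPos.top {A : List (Option α × Option α × ℝ)} (h : CPos A) : Pos (top A) := by
  induction A with
  | nil => exact pos_nil
  | cons m A ih =>
    rw [cpos_cons] at h
    rw [top_cons, pos_append]
    exact ⟨pos_pw _ h.1, ih h.2⟩

lemma CPos.bot {A : List (Option α × Option α × ℝ)} (h : CPos A) : Pos (bot A) := by
  induction A with
  | nil => exact pos_nil
  | cons m A ih =>
    rw [cpos_cons] at h
    rw [bot_cons, pos_append]
    exact ⟨pos_pw _ h.1, ih h.2⟩

/-- The alignment inserting all of `l`. -/
def insAll (l : List (α × ℝ)) : List (Option α × Option α × ℝ) :=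
  l.map fun m => (none, some m.1, m.2)

/-- The alignment deleting all of `l`. -/
def delAll (l : List (α × ℝ)) : List (Option α × Option α × ℝ) :=
  l.map fun m => (some m.1, none, m.2)

lemma bot_insAll (l : List (α × ℝ)) : bot (insAll l) = l := by
  induction l with
  | nil => rfl
  | cons y l ih => simpa [insAll, bot_cons, pw_some] using ih

lemma top_insAll (l : List (α × ℝ)) : top (insAll l) = [] := by
  induction l with
  | nil => rfl
  | cons y l ih => simpa [insAll, top_cons, pw_none] using ih

lemma bot_delAll (l : List (α × ℝ)) : bot (delAll l) = [] := by
  induction l with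
  | nil => rfl
  | cons y l ih => simpa [delAll, bot_cons, pw_none] using ih

lemma top_delAll (l : List (α × ℝ)) : top (delAll l) = l := by
  induction l with
  | nil => rfl
  | cons y l ih => simpa [delAll, top_cons, pw_some] using ih

lemma cpos_insAll {l : List (α × ℝ)} (hl : Pos l) : CPos (insAll l) := by
  intro m hm
  obtain ⟨y, hy, rfl⟩ := List.mem_map.1 hm
  exact hl y hy

lemma cpos_delAll {l : List (α × ℝ)} (hl : Pos l) : CPos (delAll l) := by
  intro m hm
  obtain ⟨y, hy, rfl⟩ := List.mem_map.1 hm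
  exact hl y hy

/-- Replace by `y` the lower character of every column that has one. -/
def relabel (y : Option α) (A : List (Option α × Option α × ℝ)) :
    List (Option α × Option α × ℝ) :=
  A.map fun m => (m.1, m.2.1.bind fun _ => y, m.2.2)

lemma cpos_relabel {y : Option α} {A : List (Option α × Option α × ℝ)} (h : CPos A) :
    CPos (relabel y A) := by
  intro m hm
  obtain ⟨y, hy, rfl⟩ := List.mem_map.1 hm
  exact h y hy

lemma top_relabel (y : Option α) (A : List (Option α × Option α × ℝ)) :
    top (relabel y A) = top A := by
  induction A with
  | nil => rfl
  | cons m A ih =>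
    rw [relabel, List.map_cons, top_cons, top_cons, ← ih]
    rfl

lemma bot_relabel_none (A : List (Option α × Option α × ℝ)) : bot (relabel none A) = [] := by
  induction A with
  | nil => rfl
  | cons m A ih =>
    have e : relabel none (m :: A) = (m.1, m.2.1.bind fun _ => none, m.2.2) :: relabel none A := rfl
    rw [e, bot_cons, ih]
    obtain ⟨x, _ | y, q⟩ := m <;> rfl

lemma bot_relabel_some (b : α) (A : List (Option α × Option α × ℝ)) :
    (∀ z ∈ bot (relabel (some b) A), z.1 = b) ∧ eLen (bot (relabel (some b) A)) = eLen (bot A) := by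
  induction A with
  | nil => simp [relabel, bot_nil]
  | cons m A ih =>
    have e : relabel (some b) (m :: A) = (m.1, m.2.1.bind fun _ => some b, m.2.2) ::
      relabel (some b) A := rfl
    rw [e, bot_cons, bot_cons, eLen_append, eLen_append, ih.2]
    obtain ⟨x, _ | y, q⟩ := m
    · simpa [pw_none] using ih.1
    · simpa [pw_some, eLen_cons] using ih.1

lemma acost_relabel {w : Option α → Option α → ℝ} (hw : ∀ x y z, w x z ≤ w x y + w y z) (a : α)
    (y : Option α) {A : List (Option α × Option α × ℝ)} (h : CPos A)
    (ha : ∀ z ∈ bot A, z.1 = a) :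
    acost w (relabel y A) ≤ acost w A + eLen (bot A) * w (some a) y := by
  induction A with
  | nil => simp [relabel, acost_nil, bot_nil, eLen_nil]
  | cons m A ih =>
    have e : relabel y (m :: A) = (m.1, m.2.1.bind fun _ => y, m.2.2) :: relabel y A := rfl
    rw [e, acost_cons, acost_cons, bot_cons, eLen_append]
    rw [bot_cons] at ha
    rw [cpos_cons] at h
    simp only [List.mem_append] at ha
    have := ih h.2 fun z hz => ha z (.inr hz)
    obtain ⟨x, _ | c, q⟩ := m
    · simp only [pw_none, eLen_nil, Option.bind_none]
      linarith
    · have hc : c = a := ha (c, q) (.inl (by simp [pw_some]))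
      subst hc
      have h2 := mul_le_mul_of_nonneg_left (hw x (some c) y) (le_of_lt h.1)
      simp only [pw_some, eLen_cons, eLen_nil, Option.bind_some]
      simp only at h2
      linarith

lemma EditCost.trans [DecidableEq α] {wdel wins : α → ℝ} {wsub : α → α → ℝ}
    {u v x : List (α × ℝ)} {c d : ℝ} (h : EditCost wdel wins wsub u v c)
    (h' : EditCost wdel wins wsub v x d) : EditCost wdel wins wsub u x (c + d) := by
  induction h' with
  | refl => simpa using h
  | step _ hs ih => rw [← add_assoc]; exact ih.step hs

lemma EditCost.of_step [DecidableEq α] {wdel wins : α → ℝ} {wsub : α → α → ℝ}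
    {u v : List (α × ℝ)} {c : ℝ} (h : Step wdel wins wsub u v c) :
    EditCost wdel wins wsub u v c := by
  simpa using EditCost.refl.step h

lemma res_pw [DecidableEq α] (x : Option α) {q : ℝ} (hq : 0 < q) : RES (pw x q) := by
  cases x
  · exact res_nil
  · exact res_single hq

section Align
variable [Inhabited α]

lemma pw_split (x : Option α) {q r : ℝ} (hq : 0 < q) (hr : 0 < r) :
    Eqv (pw x q ++ pw x r) (pw x (q + r)) := by
  cases x with
  | none => exact Eqv.refl _
  | some a =>
    exact eqv_const (l := [(a, q)] ++ [(a, r)]) (pos_append.2 ⟨pos_pw (some a) hq,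
      pos_pw (some a) hr⟩) (by simp) (by simp [eLen_cons, eLen_nil])

/-- An alignment can be cut at any point of its lower row, possibly through a column. -/
lemma align_split (w : Option α → Option α → ℝ) {A : List (Option α × Option α × ℝ)} (hA : CPos A)
    {t : ℝ} (ht : 0 ≤ t) (htA : t ≤ eLen (bot A)) :
    ∃ B C, CPos B ∧ CPos C ∧ eLen (bot B) = t ∧ Eqv (top (B ++ C)) (top A) ∧
      Eqv (bot (B ++ C)) (bot A) ∧ acost w (B ++ C) = acost w A := by
  induction A generalizing t with
  | nil =>
    rw [bot_nil, eLen_nil] at htA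
    exact ⟨[], [], hA, hA, by rw [bot_nil, eLen_nil]; linarith, Eqv.refl _, Eqv.refl _, rfl⟩
  | cons m A ih =>
    obtain ⟨x, y, q⟩ := m
    have h := cpos_cons.1 hA
    simp only at h
    rw [bot_cons, eLen_append] at htA
    by_cases hc : eLen (pw y q) ≤ t
    · obtain ⟨B, C, hB, hC, h1, h2, h3, h4⟩ := ih h.2 (t := t - eLen (pw y q)) (by linarith)
        (by simp only at htA; linarith)
      refine ⟨(x, y, q) :: B, C, cpos_cons.2 ⟨h.1, hB⟩, hC, ?_, ?_, ?_, ?_⟩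
      · rw [bot_cons, eLen_append, h1]; simp
      · rw [List.cons_append, top_cons, top_cons]
        exact (Eqv.refl _).append (pos_pw _ h.1) (pos_pw _ h.1) h2
      · rw [List.cons_append, bot_cons, bot_cons]
        exact (Eqv.refl _).append (pos_pw _ h.1) (pos_pw _ h.1) h3
      · rw [List.cons_append, acost_cons, acost_cons, h4]
    · rcases ht.eq_or_lt with rfl | ht0
      · exact ⟨[], (x, y, q) :: A, cpos_nil, hA, rfl, Eqv.refl _, Eqv.refl _, rfl⟩
      · cases y with
        | none => simp [pw_none, eLen_nil] at hc; linarith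
        | some b =>
          simp only [pw_some, eLen_cons, eLen_nil, add_zero, not_le] at hc
          have hqt : 0 < q - t := by linarith
          refine ⟨[(x, some b, t)], (x, some b, q - t) :: A, by simpa [CPos] using ht0,
            cpos_cons.2 ⟨hqt, h.2⟩, by simp [bot, pw_some, eLen_cons, eLen_nil], ?_, ?_, ?_⟩
          · simp only [List.cons_append, List.nil_append, top_cons]
            rw [← List.append_assoc]
            refine Eqv.append (pos_append.2 ⟨pos_pw _ ht0, pos_pw _ hqt⟩) (pos_pw _ h.1) ?_
              (Eqv.refl _)
            simpa using pw_split x ht0 hqt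
          · simp only [List.cons_append, List.nil_append, bot_cons]
            rw [← List.append_assoc]
            refine Eqv.append (pos_append.2 ⟨pos_pw _ ht0, pos_pw _ hqt⟩) (pos_pw _ h.1) ?_
              (Eqv.refl _)
            simpa using pw_split (some b) ht0 hqt
          · simp only [List.cons_append, List.nil_append, acost_cons]
            ring

lemma list_split {l : List (α × ℝ)} (hl : Pos l) {t : ℝ} (ht : 0 ≤ t) (htl : t ≤ eLen l) :
    ∃ p q, Pos p ∧ Pos q ∧ eLen p = t ∧ Eqv (p ++ q) l := by
  obtain ⟨B, C, hB, hC, h1, -, h2, -⟩ := align_split (fun _ _ => 0) (cpos_insAll hl) ht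
    (by rwa [bot_insAll])
  rw [bot_append, bot_insAll] at h2
  exact ⟨bot B, bot C, hB.bot, hC.bot, h1, h2⟩

/-- Cutting an alignment along a factorization `p ++ r` of its lower row. -/
lemma align_cut (w : Option α → Option α → ℝ) {A : List (Option α × Option α × ℝ)} (hA : CPos A)
    {p r : List (α × ℝ)} (hp : Pos p) (hr : Pos r) (h : Eqv (bot A) (p ++ r)) :
    ∃ B C, CPos B ∧ CPos C ∧ Eqv (bot B) p ∧ Eqv (bot C) r ∧ Eqv (top (B ++ C)) (top A) ∧
      acost w (B ++ C) = acost w A := by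
  have h1 := h.1
  rw [eLen_append] at h1
  obtain ⟨B, C, hB, hC, e, h2, h3, h4⟩ := align_split w hA hp.eLen_nonneg
    (by linarith [hr.eLen_nonneg])
  rw [bot_append] at h3
  have := (h3.trans h).cancel hB.bot hp e
  exact ⟨B, C, hB, hC, this.1, this.2, h2, h4⟩

lemma bot_relabel {y : Option α} {A : List (Option α × Option α × ℝ)} (h : CPos A) {q : ℝ}
    (hq : eLen (bot A) = q) : Eqv (bot (relabel y A)) (pw y q) := by
  cases y with
  | none => rw [bot_relabel_none]; exact Eqv.refl _
  | some b =>
    exact eqv_const (cpos_relabel h).bot (bot_relabel_some b A).1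
      ((bot_relabel_some b A).2.trans hq)

/-- Composition of an alignment with one edit operation on its lower row: the columns whose lower
characters are edited are relabelled, and the weight is controlled by the triangle inequality. -/
lemma align_step [DecidableEq α] {wdel wins : α → ℝ} {wsub : α → α → ℝ}
    (hw : ∀ x y z, wt wdel wins wsub x z ≤ wt wdel wins wsub x y + wt wdel wins wsub y z)
    {A : List (Option α × Option α × ℝ)} (hA : CPos A) {u v : List (α × ℝ)} {c : ℝ}
    (hu : Eqv (bot A) u) (hs : Step wdel wins wsub u v c) :
    ∃ B, CPos B ∧ Eqv (top B) (top A) ∧ Eqv (bot B) v ∧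
      acost (wt wdel wins wsub) B ≤ acost (wt wdel wins wsub) A + c := by
  obtain ⟨p, r, hp, hr, h⟩ := hs
  -- Deletion and substitution are treated together, with target `y : Option α`.
  have key : ∀ (a : α) (y : Option α) (q : ℝ), 0 < q → u = rcat p (rcat [(a, q)] r) →
      Eqv v (p ++ (pw y q ++ r)) → c = q * wt wdel wins wsub (some a) y →
      ∃ B, CPos B ∧ Eqv (top B) (top A) ∧ Eqv (bot B) v ∧
        acost (wt wdel wins wsub) B ≤ acost (wt wdel wins wsub) A + c := by
    rintro a y q hq rfl hv rfl
    have hx : RES [(a, q)] := res_single hq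
    obtain ⟨B, C, hB, hC, b1, b2, b3, b4⟩ := align_cut (wt wdel wins wsub) hA hp.2
      (pos_append.2 ⟨hx.2, hr.2⟩) (hu.trans (rcat_rcat_spec hp hx hr).2)
    obtain ⟨D, E, hD, hE, d1, d2, d3, d4⟩ := align_cut (wt wdel wins wsub) hC hx.2 hr.2 b2
    have hDq : eLen (bot D) = q := by rw [d1.1]; simp [eLen_cons, eLen_nil]
    refine ⟨B ++ (relabel y D ++ E), cpos_append.2 ⟨hB, cpos_append.2 ⟨cpos_relabel hD, hE⟩⟩,
      ?_, ?_, ?_⟩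
    · refine Eqv.trans ?_ b3
      rw [top_append, top_append, top_append, top_relabel, ← top_append]
      exact (Eqv.refl _).append hB.top hB.top d3
    · refine Eqv.trans ?_ hv.symm
      rw [bot_append, bot_append]
      exact b1.append hB.bot hp.2 ((bot_relabel hD hDq).append (cpos_relabel hD).bot
        (pos_pw _ hq) d2)
    · have h1 := acost_relabel hw a y hD (const_of_charAt hD.bot fun x hx hxl => by
        rw [d1.2 x hx, charAt]
        rw [hDq] at hxl
        rw [if_pos hxl])
      rw [hDq] at h1
      rw [← b4]
      rw [acost_append] at d4 ⊢
      rw [acost_append, acost_append]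
      linarith
  rcases h with ⟨a, q, hq, rfl, rfl, rfl⟩ | ⟨a, q, hq, h1, h2, h3⟩ | ⟨a, b, q, hq, h1, h2, h3⟩
  · obtain ⟨B, C, hB, hC, b1, b2, b3, b4⟩ := align_cut (wt wdel wins wsub) hA hp.2 hr.2
      (hu.trans (rcat_spec hp hr).2)
    have hx : RES [(a, q)] := res_single hq
    refine ⟨B ++ (none, some a, q) :: C, cpos_append.2 ⟨hB, cpos_cons.2 ⟨hq, hC⟩⟩, ?_, ?_, ?_⟩
    · rw [top_append, top_cons]
      simp only [pw_none, List.nil_append]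
      rwa [top_append] at b3
    · refine Eqv.trans ?_ (rcat_rcat_spec hp hx hr).2.symm
      rw [bot_append, bot_cons]
      exact b1.append hB.bot hp.2 ((Eqv.refl _).append hx.2 hx.2 b2)
    · rw [← b4, acost_append, acost_append, acost_cons]
      simp only [wt]
      linarith
  · exact key a none q hq h1 (h2 ▸ (rcat_spec hp hr).2) h3
  · exact key a (some b) q hq h1 (h2 ▸ (rcat_rcat_spec hp (res_single hq) hr).2) h3

/-! ### Alignments and edit sequences -/

/-- Every edit sequence is dominated by an alignment. -/
lemma align_of_edit [DecidableEq α] {wdel wins : α → ℝ} {wsub : α → α → ℝ}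
    (hsub0 : ∀ a, wsub a a = 0)
    (hw : ∀ x y z, wt wdel wins wsub x z ≤ wt wdel wins wsub x y + wt wdel wins wsub y z)
    {u v : List (α × ℝ)} (hu : RES u) {c : ℝ} (h : EditCost wdel wins wsub u v c) :
    ∃ A, CPos A ∧ Eqv (top A) u ∧ Eqv (bot A) v ∧ acost (wt wdel wins wsub) A ≤ c := by
  induction h with
  | refl =>
    obtain ⟨-, hu⟩ := hu
    suffices ∃ A, CPos A ∧ top A = u ∧ bot A = u ∧ acost (wt wdel wins wsub) A = 0 by
      obtain ⟨A, h1, h2, h3, h4⟩ := this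
      exact ⟨A, h1, h2 ▸ Eqv.refl _, h3 ▸ Eqv.refl _, h4.le⟩
    induction u with
    | nil => exact ⟨[], cpos_nil, rfl, rfl, rfl⟩
    | cons x u ih =>
      obtain ⟨A, h1, h2, h3, h4⟩ := ih (pos_cons.1 hu).2
      refine ⟨(some x.1, some x.1, x.2) :: A, cpos_cons.2 ⟨(pos_cons.1 hu).1, h1⟩, ?_, ?_, ?_⟩
      · simp [top_cons, pw_some, h2]
      · simp [bot_cons, pw_some, h3]
      · simp [acost_cons, h4, wt, hsub0]
  | step _ hs ih =>
    obtain ⟨A, h1, h2, h3, h4⟩ := ih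
    obtain ⟨B, b1, b2, b3, b4⟩ := align_step hw h1 h3 hs
    exact ⟨B, b1, b2.trans h2, b3, by linarith⟩

/-- The columns of an alignment can be carried out one by one, from left to right, behind a prefix
`p` of columns already treated. -/
lemma edit_of_align_aux [DecidableEq α] {wdel wins : α → ℝ} {wsub : α → α → ℝ}
    {A : List (Option α × Option α × ℝ)} (hA : CPos A) {p u v : List (α × ℝ)} (hp : RES p)
    (hu : RES u) (hv : RES v) (hAu : Eqv (p ++ top A) u) (hAv : Eqv (p ++ bot A) v) :
    EditCost wdel wins wsub u v (acost (wt wdel wins wsub) A) := by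
  induction A generalizing p u with
  | nil =>
    rw [show u = v from (hAu.symm.trans hAv).eq hu hv]
    exact EditCost.refl
  | cons m A ih =>
    obtain ⟨x, y, q⟩ := m
    rw [cpos_cons] at hA
    rw [top_cons] at hAu
    rw [bot_cons] at hAv
    have hq : 0 < q := hA.1
    obtain ⟨r, hr, hrA⟩ := exists_res hA.2.top
    have hx := rcat_rcat_spec hp (res_pw x hq) hr
    have hy := rcat_rcat_spec hp (res_pw y hq) hr
    have hpy := rcat_spec hp (res_pw y hq)
    -- The string after this column has been treated is `rcat p (rcat (pw y q) r)`.
    have e : u = rcat p (rcat (pw x q) r) := by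
      refine (hAu.symm.trans (Eqv.trans ?_ hx.2.symm)).eq hu hx.1
      exact (Eqv.refl _).append hp.2 hp.2 ((Eqv.refl _).append (pos_pw _ hq) (pos_pw _ hq) hrA.symm)
    have h1 : EditCost wdel wins wsub (rcat p (rcat (pw y q) r)) v
        (acost (wt wdel wins wsub) A) := by
      refine ih hA.2 hpy.1 hy.1 ?_ ?_
      · refine Eqv.trans (hpy.2.append hpy.1.2 (pos_append.2 ⟨hp.2, pos_pw _ hq⟩) hrA.symm) ?_
        rw [List.append_assoc]
        exact hy.2.symm
      · refine Eqv.trans (hpy.2.append hpy.1.2 (pos_append.2 ⟨hp.2, pos_pw _ hq⟩)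
          (Eqv.refl _)) ?_
        rwa [List.append_assoc]
    have rnil : rcat [] r = r := by simp [rcat, eCat]
    have h0 : EditCost wdel wins wsub u (rcat p (rcat (pw y q) r))
        (q * wt wdel wins wsub x y) := by
      rw [e]
      cases x with
      | none =>
        cases y with
        | none => simpa [wt] using EditCost.refl
        | some b => exact .of_step ⟨p, r, hp, hr, .inl ⟨b, q, hq, by rw [pw_none, rnil], rfl, rfl⟩⟩
      | some a =>
        cases y with
        | none =>
          exact .of_step ⟨p, r, hp, hr, .inr (.inl ⟨a, q, hq, rfl, by rw [pw_none, rnil], rfl⟩)⟩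
        | some b => exact .of_step ⟨p, r, hp, hr, .inr (.inr ⟨a, b, q, hq, rfl, rfl, rfl⟩)⟩
    rw [acost_cons]
    exact h0.trans h1

lemma edit_of_align [DecidableEq α] {wdel wins : α → ℝ} {wsub : α → α → ℝ}
    {A : List (Option α × Option α × ℝ)} (hA : CPos A) {u v : List (α × ℝ)}
    (hu : RES u) (hv : RES v) (hAu : Eqv (top A) u) (hAv : Eqv (bot A) v) :
    EditCost wdel wins wsub u v (acost (wt wdel wins wsub) A) :=
  edit_of_align_aux hA res_nil hu hv hAu hAv

/-! ### Costs as integrals -/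

/-- Bounded measurable functions on `ℝ`. -/
def Nice (f : ℝ → ℝ) : Prop := Measurable f ∧ ∃ C, ∀ s, ‖f s‖ ≤ C

omit [Inhabited α] in
lemma Nice.const (c : ℝ) : Nice fun _ => c := ⟨measurable_const, _, fun _ => le_rfl⟩

omit [Inhabited α] in
lemma Nice.ite {f g : ℝ → ℝ} (hf : Nice f) (hg : Nice g) (b t : ℝ) :
    Nice fun s => if b + s < t then f s else g s := by
  obtain ⟨hf, C, hC⟩ := hf
  obtain ⟨hg, D, hD⟩ := hg
  refine ⟨Measurable.ite (measurableSet_lt (by fun_prop) (by fun_prop)) hf hg, max C D,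
    fun s => ?_⟩
  dsimp only
  split_ifs
  · exact (hC s).trans (le_max_left _ _)
  · exact (hD s).trans (le_max_right _ _)

omit [Inhabited α] in
lemma Nice.integrableOn {f : ℝ → ℝ} (hf : Nice f) {s : Set ℝ} (hs : volume s ≠ ⊤) :
    IntegrableOn f s := by
  obtain ⟨hf, C, hC⟩ := hf
  exact Measure.integrableOn_of_bounded hs hf.aestronglyMeasurable
    (Filter.Eventually.of_forall hC)

omit [Inhabited α] in
lemma Nice.intervalIntegrable {f : ℝ → ℝ} (hf : Nice f) (a b : ℝ) :
    IntervalIntegrable f volume a b :=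
  ⟨hf.integrableOn (by simp), hf.integrableOn (by simp)⟩

lemma nice_charAt₂ (φ : α → α → ℝ) (u v : List (α × ℝ)) (a b : ℝ) :
    Nice fun s => φ (charAt u (a + s)) (charAt v (b + s)) := by
  induction u generalizing a with
  | nil =>
    induction v generalizing b with
    | nil => exact Nice.const (φ default default)
    | cons y v ih =>
      obtain ⟨c, t⟩ := y
      convert (Nice.const (φ default c)).ite (ih (b - t)) b t using 2 with s
      simp only [charAt]
      split_ifs
      · rfl
      · rw [show b + s - t = b - t + s by ring]
  | cons x u ih =>
    obtain ⟨d, r⟩ := x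
    have h : ∀ b, Nice fun s => φ d (charAt v (b + s)) := by
      clear ih
      induction v with
      | nil => exact fun b => Nice.const (φ d default)
      | cons y v ih =>
        intro b
        obtain ⟨c, t⟩ := y
        convert (Nice.const (φ d c)).ite (ih (b - t)) b t using 2 with s
        simp only [charAt]
        split_ifs
        · rfl
        · rw [show b + s - t = b - t + s by ring]
    convert (h b).ite (ih (a - r)) a r using 2 with s
    simp only [charAt]
    split_ifs
    · rfl
    · rw [show a + s - r = a - r + s by ring]

lemma nice_charAt (h : α → ℝ) (u : List (α × ℝ)) : Nice fun s => h (charAt u s) := by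
  simpa using nice_charAt₂ (fun a _ => h a) u u 0 0

omit [Inhabited α] in
lemma integral_congr_Ico {f g : ℝ → ℝ} {t : ℝ} (ht : 0 ≤ t)
    (h : ∀ s, 0 ≤ s → s < t → f s = g s) : ∫ s in (0 : ℝ)..t, f s = ∫ s in (0 : ℝ)..t, g s := by
  rw [intervalIntegral.integral_of_le ht, intervalIntegral.integral_of_le ht,
    integral_Ioc_eq_integral_Ioo, integral_Ioc_eq_integral_Ioo]
  exact setIntegral_congr_fun measurableSet_Ioo fun s hs => h s hs.1.le hs.2

omit [Inhabited α] in
/-- Splitting `[0, r + t)` at `r`, with shifted integrands. -/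
lemma integral_split {f g k : ℝ → ℝ} {r t : ℝ} (hr : 0 ≤ r) (ht : 0 ≤ t) (hf : Nice f)
    (hg : ∀ s, 0 ≤ s → s < r → f s = g s) (hk : ∀ s, 0 ≤ s → s < t → f (r + s) = k s) :
    ∫ s in (0 : ℝ)..(r + t), f s = (∫ s in (0 : ℝ)..r, g s) + ∫ s in (0 : ℝ)..t, k s := by
  rw [← intervalIntegral.integral_add_adjacent_intervals (hf.intervalIntegrable 0 r)
    (hf.intervalIntegrable r (r + t)), integral_congr_Ico hr hg, ← integral_congr_Ico ht hk,
    intervalIntegral.integral_comp_add_left, add_zero]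

lemma integral_charAt (h : α → ℝ) {l : List (α × ℝ)} (hl : Pos l) :
    ∫ s in (0 : ℝ)..eLen l, h (charAt l s) = (l.map fun y => y.2 * h y.1).sum := by
  induction l with
  | nil => simp [eLen_nil]
  | cons y l ih =>
    obtain ⟨a, q⟩ := y
    rw [pos_cons] at hl
    simp only at hl
    rw [eLen_cons, List.map_cons, List.sum_cons, ← ih hl.2,
      integral_split (g := fun _ => h a) (k := fun s => h (charAt l s)) hl.1.le hl.2.eLen_nonneg
      (nice_charAt h _)]
    · simp
    · intro s _ hs
      simp only [charAt, if_pos hs]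
    · intro s hs _
      have : ¬ (q + s < q) := by linarith
      simp only [charAt, if_neg this, add_sub_cancel_left]

lemma Eqv.integral {l l' : List (α × ℝ)} (h : Eqv l l') (hl : Pos l) (f : α → ℝ) :
    ∫ s in (0 : ℝ)..eLen l, f (charAt l s) = ∫ s in (0 : ℝ)..eLen l', f (charAt l' s) := by
  rw [← h.1]
  exact integral_congr_Ico hl.eLen_nonneg fun s hs _ => by rw [h.2 s hs]

/-- Extension of a weight on pairs of characters by `0` to pairs involving `λ`. -/
def ext0 (φ : α → α → ℝ) : Option α → Option α → ℝ
  | some a, some b => φ a b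
  | _, _ => 0

/-- The difference between substituting `b` for `a` and deleting `a` and inserting `b`. -/
def gain (wdel wins : α → ℝ) (wsub : α → α → ℝ) (a b : α) : ℝ := wsub a b - wdel a - wins b

/-- The weight of an alignment is the cost of deleting its upper row and inserting its lower row,
corrected by the gain on the columns that match two characters. -/
lemma acost_eq (wdel wins : α → ℝ) (wsub : α → α → ℝ)
    {A : List (Option α × Option α × ℝ)} (hA : CPos A) :
    acost (wt wdel wins wsub) A = (∫ s in (0 : ℝ)..eLen (top A), wdel (charAt (top A) s)) +
      (∫ s in (0 : ℝ)..eLen (bot A), wins (charAt (bot A) s)) +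
      acost (ext0 (gain wdel wins wsub)) A := by
  rw [integral_charAt _ hA.top, integral_charAt _ hA.bot]
  clear hA
  induction A with
  | nil => simp [acost_nil, top_nil, bot_nil]
  | cons m A ih =>
    rw [acost_cons, acost_cons, top_cons, bot_cons, List.map_append, List.map_append,
      List.sum_append, List.sum_append, ih]
    obtain ⟨_ | a, _ | b, q⟩ := m <;> simp [pw_none, pw_some, wt, ext0, gain] <;> ring

omit [Inhabited α] in
/-- Integral over the part of `[0, L)` left uncovered by disjoint segments. -/
lemma integral_uncovered (pr : ℝ × ℝ × ℝ → ℝ) {f : ℝ → ℝ} (hf : Nice f) {L : ℝ} (hL : 0 ≤ L)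
    {M : List (ℝ × ℝ × ℝ)} (hM : ∀ m ∈ M, 0 < m.2.2 ∧ 0 ≤ pr m ∧ pr m + m.2.2 ≤ L)
    (hd : M.Pairwise fun m m' => Disjoint (Set.Ico (pr m) (pr m + m.2.2))
      (Set.Ico (pr m') (pr m' + m'.2.2))) :
    ∫ x in Set.Ico 0 L \ ⋃ m ∈ M, Set.Ico (pr m) (pr m + m.2.2), f x =
      (∫ x in (0 : ℝ)..L, f x) - (M.map fun m => ∫ s in (0 : ℝ)..m.2.2, f (pr m + s)).sum := by
  induction M with
  | nil =>
    simp [intervalIntegral.integral_of_le hL, integral_Ico_eq_integral_Ioo,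
      integral_Ioc_eq_integral_Ioo]
  | cons m M ih =>
    rw [List.pairwise_cons] at hd
    simp only [List.mem_cons, forall_eq_or_imp] at hM
    obtain ⟨⟨ht, h0, h1⟩, hM⟩ := hM
    have hm : ∫ s in (0 : ℝ)..m.2.2, f (pr m + s) =
        ∫ x in Set.Ico (pr m) (pr m + m.2.2), f x := by
      rw [intervalIntegral.integral_comp_add_left, add_zero,
        intervalIntegral.integral_of_le (by linarith), integral_Ioc_eq_integral_Ioo,
        integral_Ico_eq_integral_Ioo]
    rw [List.map_cons, List.sum_cons, hm]
    set E := ⋃ m ∈ M, Set.Ico (pr m) (pr m + m.2.2) with hE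
    have e : Set.Ico 0 L \ ⋃ m' ∈ m :: M, Set.Ico (pr m') (pr m' + m'.2.2) =
        (Set.Ico 0 L \ E) \ Set.Ico (pr m) (pr m + m.2.2) := by
      ext x
      simp only [hE, List.mem_cons, Set.iUnion_iUnion_eq_or_left, Set.mem_diff, Set.mem_union]
      tauto
    have hsub : Set.Ico (pr m) (pr m + m.2.2) ⊆ Set.Ico 0 L \ E := by
      intro x hx
      refine ⟨⟨h0.trans hx.1, hx.2.trans_le h1⟩, fun hxE => ?_⟩
      simp only [hE, Set.mem_iUnion] at hxE
      obtain ⟨m', hm', hx'⟩ := hxE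
      exact Set.disjoint_left.1 (hd.1 m' hm') hx hx'
    have hfin : volume (Set.Ico 0 L \ E) ≠ ⊤ :=
      ne_top_of_le_ne_top (by simp : volume (Set.Ico 0 L) ≠ ⊤) (measure_mono Set.diff_subset)
    rw [e, setIntegral_diff measurableSet_Ico (hf.integrableOn hfin) hsub, ih hM hd.2]
    ring

/-- The cost of a matching is the cost of deleting `u` and inserting `v`, corrected by the gain
along the segments. -/
lemma mCost_eq (wdel wins : α → ℝ) (wsub : α → α → ℝ) {u v : List (α × ℝ)} (hu : Pos u)
    (hv : Pos v) {M : List (ℝ × ℝ × ℝ)} (hM : IsMatching (eLen u) (eLen v) M) :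
    mCost wdel wins wsub u v M = (∫ s in (0 : ℝ)..eLen u, wdel (charAt u s)) +
      (∫ s in (0 : ℝ)..eLen v, wins (charAt v s)) +
      (M.map fun m => ∫ s in (0 : ℝ)..m.2.2,
        gain wdel wins wsub (charAt u (m.1 + s)) (charAt v (m.2.1 + s))).sum := by
  obtain ⟨h1, h2, -⟩ := hM
  have e1 := integral_uncovered (fun m => m.1) (nice_charAt wdel u) hu.eLen_nonneg (M := M)
    (fun m hm => ⟨(h1 m hm).1, (h1 m hm).2.1, (h1 m hm).2.2.2.1⟩) (h2.imp fun h => h.1)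
  have e2 := integral_uncovered (fun m => m.2.1) (nice_charAt wins v) hv.eLen_nonneg (M := M)
    (fun m hm => ⟨(h1 m hm).1, (h1 m hm).2.2.1, (h1 m hm).2.2.2.2⟩) (h2.imp fun h => h.2)
  have e3 : (M.map fun m => ∫ s in (0 : ℝ)..m.2.2,
        gain wdel wins wsub (charAt u (m.1 + s)) (charAt v (m.2.1 + s))).sum =
      (M.map fun m => ∫ s in (0 : ℝ)..m.2.2,
        wsub (charAt u (m.1 + s)) (charAt v (m.2.1 + s))).sum -
      (M.map fun m => ∫ s in (0 : ℝ)..m.2.2, wdel (charAt u (m.1 + s))).sum -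
      (M.map fun m => ∫ s in (0 : ℝ)..m.2.2, wins (charAt v (m.2.1 + s))).sum := by
    clear e1 e2 h1 h2
    induction M with
    | nil => simp
    | cons m M ih =>
      have i1 := (nice_charAt₂ wsub u v m.1 m.2.1).intervalIntegrable 0 m.2.2
      have i2 := (nice_charAt₂ (fun a _ => wdel a) u v m.1 m.2.1).intervalIntegrable 0 m.2.2
      have i3 := (nice_charAt₂ (fun _ b => wins b) u v m.1 m.2.1).intervalIntegrable 0 m.2.2
      have hI := intervalIntegral.integral_sub (i1.sub i2) i3
      rw [intervalIntegral.integral_sub i1 i2] at hI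
      simp only [List.map_cons, List.sum_cons]
      rw [ih, show (∫ s in (0 : ℝ)..m.2.2,
        gain wdel wins wsub (charAt u (m.1 + s)) (charAt v (m.2.1 + s))) = _ from hI]
      ring
  rw [e3]
  change (∫ x in Set.Ico 0 (eLen u) \ ⋃ m ∈ M, Set.Ico m.1 (m.1 + m.2.2), wdel (charAt u x)) +
    (∫ y in Set.Ico 0 (eLen v) \ ⋃ m ∈ M, Set.Ico m.2.1 (m.2.1 + m.2.2), wins (charAt v y)) +
    _ = _
  rw [e1, e2]
  ring

/-! ### Alignments and matchings -/

omit [Inhabited α] in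
/-- A list of segments going from left to right in both projections is a matching. -/
lemma isMatching_of_sorted {L₁ L₂ : ℝ} {M : List (ℝ × ℝ × ℝ)}
    (h1 : ∀ m ∈ M, 0 < m.2.2 ∧ 0 ≤ m.1 ∧ 0 ≤ m.2.1 ∧ m.1 + m.2.2 ≤ L₁ ∧ m.2.1 + m.2.2 ≤ L₂)
    (h2 : M.Pairwise fun m m' => m.1 + m.2.2 ≤ m'.1 ∧ m.2.1 + m.2.2 ≤ m'.2.1) :
    IsMatching L₁ L₂ M := by
  refine ⟨h1, ?_, ?_⟩
  · refine h2.imp fun {m m'} h => ⟨?_, ?_⟩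
    · exact Set.disjoint_left.2 fun x hx hx' => by
        have := hx.2; have := hx'.1; linarith [h.1]
    · exact Set.disjoint_left.2 fun x hx hx' => by
        have := hx.2; have := hx'.1; linarith [h.2]
  · intro m hm m' hm'
    let R : ℝ × ℝ × ℝ → ℝ × ℝ × ℝ → Prop := fun m m' => ∀ s s' : ℝ, 0 ≤ s → s < m.2.2 → 0 ≤ s' →
      s' < m'.2.2 → (m.1 + s < m'.1 + s' → m.2.1 + s ≤ m'.2.1 + s') ∧
        (m'.1 + s' < m.1 + s → m'.2.1 + s' ≤ m.2.1 + s)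
    have hsymm : Std.Symm R := ⟨fun a b h s s' a1 a2 a3 a4 => (h s' s a3 a4 a1 a2).symm⟩
    have hR : R m m' := by
      refine List.Pairwise.forall_of_forall (R := R) (fun a _ s s' _ _ _ _ => ?_)
        (h2.imp fun {a b} h s s' a1 a2 a3 a4 => ?_) hm hm'
      · exact ⟨fun h => by linarith, fun h => by linarith⟩
      · exact ⟨fun _ => by linarith [h.2], fun _ => by linarith [h.1]⟩
    exact fun s s' a1 a2 a3 a4 => (hR s s' a1 a2 a3 a4).1

omit [Inhabited α] in
/-- The segments of a matching can be listed from left to right in both projections. -/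
lemma IsMatching.exists_sorted {L₁ L₂ : ℝ} {M : List (ℝ × ℝ × ℝ)} (h : IsMatching L₁ L₂ M) :
    ∃ N : List (ℝ × ℝ × ℝ), N.Perm M ∧ N.Pairwise fun m m' => m.1 + m.2.2 ≤ m'.1 ∧ m.2.1 + m.2.2 ≤ m'.2.1 := by
  obtain ⟨h1, h2, h3⟩ := h
  let le : ℝ × ℝ × ℝ → ℝ × ℝ × ℝ → Bool := fun m m' => decide (m.1 ≤ m'.1)
  have hs : (M.mergeSort le).Pairwise fun m m' => m.1 ≤ m'.1 := by
    have := List.pairwise_mergeSort (le := le) (fun a b c hab hbc => by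
      simp only [le, decide_eq_true_eq] at *; linarith)
      (fun a b => by simpa [le] using le_total a.1 b.1) M
    exact this.imp fun h => by simpa [le] using h
  have hp := List.mergeSort_perm M le
  have h2' := (hp.pairwise_iff (fun {a b} h => ⟨h.1.symm, h.2.symm⟩)).2 h2
  refine ⟨_, hp, List.Pairwise.imp_of_mem ?_ (hs.and h2')⟩
  intro m m' hm hm' ⟨hle, hd1, hd2⟩
  rw [hp.mem_iff] at hm hm'
  have t := (h1 m hm).1
  have t' := (h1 m' hm').1
  -- The start of `m'` is not covered by `m`, in either projection.
  have k1 : m.1 + m.2.2 ≤ m'.1 := by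
    by_contra! hc
    exact Set.disjoint_left.1 hd1 ⟨hle, hc⟩ ⟨le_rfl, by linarith⟩
  refine ⟨k1, ?_⟩
  have k2 := h3 m hm m' hm' 0 0 le_rfl t le_rfl t' (by linarith)
  by_contra! hc
  exact Set.disjoint_left.1 hd2 ⟨by linarith, hc⟩ ⟨le_rfl, by linarith⟩

lemma mCost_perm (wdel wins : α → ℝ) (wsub : α → α → ℝ) (u v : List (α × ℝ))
    {M N : List (ℝ × ℝ × ℝ)} (h : N.Perm M) :
    mCost wdel wins wsub u v N = mCost wdel wins wsub u v M := by
  have e1 : mEX N = mEX M := by ext x; simp [mEX, h.mem_iff]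
  have e2 : mEY N = mEY M := by ext x; simp [mEY, h.mem_iff]
  rw [mCost, mCost, e1, e2, (h.map _).sum_eq]

/-- The segments of the columns of an alignment that match two characters, where the alignment
starts at the point `(x, y)`. -/
def segs : List (Option α × Option α × ℝ) → ℝ → ℝ → List (ℝ × ℝ × ℝ)
  | [], _, _ => []
  | (some _, some _, q) :: A, x, y => (x, y, q) :: segs A (x + q) (y + q)
  | (some _, none, q) :: A, x, y => segs A (x + q) y
  | (none, some _, q) :: A, x, y => segs A x (y + q)
  | (none, none, _) :: A, x, y => segs A x y

omit [Inhabited α] in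
lemma segs_spec {A : List (Option α × Option α × ℝ)} (hA : CPos A) (x y : ℝ) :
    (∀ m ∈ segs A x y, 0 < m.2.2 ∧ x ≤ m.1 ∧ y ≤ m.2.1 ∧ m.1 + m.2.2 ≤ x + eLen (top A) ∧
      m.2.1 + m.2.2 ≤ y + eLen (bot A)) ∧
    (segs A x y).Pairwise fun m m' => m.1 + m.2.2 ≤ m'.1 ∧ m.2.1 + m.2.2 ≤ m'.2.1 := by
  induction A generalizing x y with
  | nil => simp [segs]
  | cons m A ih =>
    rw [cpos_cons] at hA
    have t1 := hA.2.top.eLen_nonneg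
    have t2 := hA.2.bot.eLen_nonneg
    obtain ⟨_ | a, _ | b, q⟩ := m <;>
      simp only [segs, top_cons, bot_cons, pw_none, pw_some, eLen_append, eLen_cons, eLen_nil,
        List.mem_cons, forall_eq_or_imp, List.pairwise_cons] <;> simp only at hA
    · simpa using ih hA.2 x y
    · refine ⟨fun m hm => ?_, (ih hA.2 _ _).2⟩
      obtain ⟨h1, h2, h3, h4, h5⟩ := (ih hA.2 _ _).1 m hm
      exact ⟨h1, by linarith, by linarith, by linarith, by linarith⟩
    · refine ⟨fun m hm => ?_, (ih hA.2 _ _).2⟩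
      obtain ⟨h1, h2, h3, h4, h5⟩ := (ih hA.2 _ _).1 m hm
      exact ⟨h1, by linarith, by linarith, by linarith, by linarith⟩
    · refine ⟨⟨⟨hA.1, le_rfl, le_rfl, by linarith, by linarith⟩, fun m hm => ?_⟩,
        fun m hm => ?_, (ih hA.2 _ _).2⟩
      · obtain ⟨h1, h2, h3, h4, h5⟩ := (ih hA.2 _ _).1 m hm
        exact ⟨h1, by linarith, by linarith, by linarith, by linarith⟩
      · obtain ⟨h1, h2, h3, h4, h5⟩ := (ih hA.2 _ _).1 m hm
        exact ⟨h2, h3⟩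

omit [Inhabited α] in
lemma acost_ext0 (φ : α → α → ℝ) (m : Option α × Option α × ℝ)
    (A : List (Option α × Option α × ℝ)) (h : m.1 = none ∨ m.2.1 = none) :
    acost (ext0 φ) (m :: A) = acost (ext0 φ) A := by
  obtain ⟨_ | a, _ | b, q⟩ := m <;> simp_all [acost_cons, ext0]

/-- The weight of the matching columns is an integral along their segments; `f` and `g` give the
characters of the two rows, as functions of the position. -/
lemma segs_gain (φ : α → α → ℝ) {A : List (Option α × Option α × ℝ)} (hA : CPos A)
    {x y : ℝ} {f g : ℝ → α} (hf : ∀ s, 0 ≤ s → f (x + s) = charAt (top A) s)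
    (hg : ∀ s, 0 ≤ s → g (y + s) = charAt (bot A) s) :
    ((segs A x y).map fun m => ∫ s in (0 : ℝ)..m.2.2, φ (f (m.1 + s)) (g (m.2.1 + s))).sum =
      acost (ext0 φ) A := by
  induction A generalizing x y with
  | nil => simp [segs, acost_nil]
  | cons m A ih =>
    have hm := cpos_cons.1 hA
    -- Removing the term of the first column shifts the origin of the row by its length.
    have shift : ∀ {z q : ℝ} {k : ℝ → α} {l : List (α × ℝ)} {a : α}, 0 < q →
        (∀ s, 0 ≤ s → k (z + s) = charAt ([(a, q)] ++ l) s) →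
        ∀ s, 0 ≤ s → k (z + q + s) = charAt l s := by
      intro z q k l a hq hk s hs
      have hp : Pos [(a, q)] := by simpa [Pos] using hq
      rw [add_assoc, hk _ (by linarith), ← charAt_append_right hp l hs]
      simp [eLen_cons, eLen_nil]
    rw [top_cons] at hf
    rw [bot_cons] at hg
    obtain ⟨_ | a, _ | b, q⟩ := m <;> simp only [pw_none, pw_some, List.nil_append] at hf hg hm
    · rw [acost_ext0 _ _ _ (by simp)]
      exact ih hm.2 hf hg
    · rw [acost_ext0 _ _ _ (by simp)]
      exact ih hm.2 hf (shift hm.1 hg)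
    · rw [acost_ext0 _ _ _ (by simp)]
      exact ih hm.2 (shift hm.1 hf) hg
    · rw [segs, List.map_cons, List.sum_cons, acost_cons,
        ih hm.2 (shift hm.1 hf) (shift hm.1 hg)]
      congr 1
      rw [integral_congr_Ico hm.1.le (g := fun _ => φ a b)]
      · simp [ext0]
      · intro s h0 hs
        simp only
        rw [hf s h0, hg s h0]
        simp [charAt, hs]

/-- Every alignment gives a matching of the same cost. -/
lemma matching_of_align (wdel wins : α → ℝ) (wsub : α → α → ℝ)
    {A : List (Option α × Option α × ℝ)} (hA : CPos A) {u v : List (α × ℝ)} (hu : Pos u)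
    (hv : Pos v) (hAu : Eqv (top A) u) (hAv : Eqv (bot A) v) :
    ∃ M, IsMatching (eLen u) (eLen v) M ∧
      mCost wdel wins wsub u v M = acost (wt wdel wins wsub) A := by
  obtain ⟨h1, h2⟩ := segs_spec hA 0 0
  have hM : IsMatching (eLen u) (eLen v) (segs A 0 0) := by
    refine isMatching_of_sorted (fun m hm => ?_) h2
    simpa [hAu.1, hAv.1] using h1 m hm
  refine ⟨_, hM, ?_⟩
  rw [mCost_eq wdel wins wsub hu hv hM, acost_eq wdel wins wsub hA, hAu.integral hA.top,
    hAv.integral hA.bot, segs_gain _ hA (f := charAt u) (g := charAt v)]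
  · intro s hs; rw [zero_add, hAu.2 s hs]
  · intro s hs; rw [zero_add, hAv.2 s hs]

/-- Columns matching the constant string of character `a` with `l`. -/
def matchConst (a : α) (l : List (α × ℝ)) : List (Option α × Option α × ℝ) :=
  l.map fun m => (some a, some m.1, m.2)

omit [Inhabited α] in
lemma bot_matchConst (a : α) (l : List (α × ℝ)) : bot (matchConst a l) = l := by
  induction l with
  | nil => rfl
  | cons y l ih => simpa [matchConst, bot_cons, pw_some] using ih

omit [Inhabited α] in
lemma top_matchConst (a : α) (l : List (α × ℝ)) :
    top (matchConst a l) = l.map fun y => (a, y.2) := by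
  induction l with
  | nil => rfl
  | cons y l ih => simpa [matchConst, top_cons, pw_some] using ih

omit [Inhabited α] in
lemma acost_matchConst (φ : α → α → ℝ) (a : α) (l : List (α × ℝ)) :
    acost (ext0 φ) (matchConst a l) = (l.map fun y => y.2 * φ a y.1).sum := by
  simp [acost, matchConst, ext0, Function.comp_def]

omit [Inhabited α] in
lemma cpos_matchConst {a : α} {l : List (α × ℝ)} (hl : Pos l) : CPos (matchConst a l) := by
  intro m hm
  obtain ⟨y, hy, rfl⟩ := List.mem_map.1 hm
  exact hl y hy

/-- Two strings of the same length can be matched completely, after subdividing the terms of the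
first one according to the second. -/
lemma align_full (φ : α → α → ℝ) {u v : List (α × ℝ)} (hu : Pos u) (hv : Pos v)
    (h : eLen u = eLen v) :
    ∃ A, CPos A ∧ Eqv (top A) u ∧ Eqv (bot A) v ∧
      acost (ext0 φ) A = ∫ s in (0 : ℝ)..eLen u, φ (charAt u s) (charAt v s) := by
  induction u generalizing v with
  | nil =>
    refine ⟨[], cpos_nil, Eqv.refl _, ?_, by simp [acost_nil, eLen_nil]⟩
    cases v with
    | nil => exact Eqv.refl _
    | cons y v =>
      have := pos_cons.1 hv
      rw [eLen_nil, eLen_cons] at h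
      linarith [this.2.eLen_nonneg]
  | cons z u ih =>
    obtain ⟨a, q⟩ := z
    rw [pos_cons] at hu
    rw [eLen_cons] at h
    have hu0 := hu.2.eLen_nonneg
    have hq : 0 < q := hu.1
    simp only at h
    obtain ⟨v1, v2, p1, p2, l1, e⟩ := list_split hv hq.le (by linarith)
    have l2 : eLen u = eLen v2 := by
      have := e.1
      rw [eLen_append] at this
      linarith
    obtain ⟨A, a1, a2, a3, a4⟩ := ih hu.2 p2 l2
    have hm := cpos_matchConst (a := a) p1
    have hsg : Pos [(a, q)] := by simpa [Pos] using hq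
    refine ⟨matchConst a v1 ++ A, cpos_append.2 ⟨hm, a1⟩, ?_, ?_, ?_⟩
    · rw [top_append]
      refine Eqv.append (p' := [(a, q)]) hm.top hsg ?_ a2
      refine eqv_const hm.top (fun y hy => ?_) ?_
      · rw [top_matchConst] at hy
        obtain ⟨z, _, rfl⟩ := List.mem_map.1 hy
        rfl
      rw [← l1, top_matchConst]
      simp [eLen, Function.comp_def]
    · rw [bot_append, bot_matchConst]
      exact ((Eqv.refl _).append p1 p1 a3).trans e
    · have hn := nice_charAt₂ φ ((a, q) :: u) v 0 0
      simp only [zero_add] at hn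
      rw [acost_append, acost_matchConst, ← integral_charAt (φ a) p1, l1, a4, eLen_cons]
      symm
      refine integral_split hq.le hu0 hn (fun s h0 hs => ?_) (fun s h0 hs => ?_)
      · rw [← e.2 s h0, charAt_append_left p1 v2 h0 (l1 ▸ hs)]
        simp [charAt, hs]
      · rw [← e.2 _ (by linarith), ← l1, charAt_append_right p1 v2 h0, l1,
          ← charAt_append_right hsg u h0]
        simp [eLen_cons, eLen_nil]

/-- A list of segments going from left to right gives an alignment of the same gain. The induction
works on the parts `u`, `v` of the two strings that start at the point `(x, y)`. -/
lemma align_of_sorted (φ : α → α → ℝ) {M : List (ℝ × ℝ × ℝ)} {u v : List (α × ℝ)} {x y : ℝ}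
    (hu : Pos u) (hv : Pos v)
    (h1 : ∀ m ∈ M, 0 < m.2.2 ∧ x ≤ m.1 ∧ y ≤ m.2.1 ∧ m.1 + m.2.2 ≤ x + eLen u ∧
      m.2.1 + m.2.2 ≤ y + eLen v)
    (h2 : M.Pairwise fun m m' => m.1 + m.2.2 ≤ m'.1 ∧ m.2.1 + m.2.2 ≤ m'.2.1) :
    ∃ A, CPos A ∧ Eqv (top A) u ∧ Eqv (bot A) v ∧
      acost (ext0 φ) A = (M.map fun m => ∫ s in (0 : ℝ)..m.2.2,
        φ (charAt u (m.1 - x + s)) (charAt v (m.2.1 - y + s))).sum := by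
  -- Deleting and inserting has no gain.
  have del0 : ∀ l : List (α × ℝ), acost (ext0 φ) (delAll l) = 0 := by
    intro l; simp [acost, delAll, ext0, Function.comp_def]
  have ins0 : ∀ l : List (α × ℝ), acost (ext0 φ) (insAll l) = 0 := by
    intro l; simp [acost, insAll, ext0, Function.comp_def]
  induction M generalizing u v x y with
  | nil =>
    refine ⟨delAll u ++ insAll v, cpos_append.2 ⟨cpos_delAll hu, cpos_insAll hv⟩, ?_, ?_, ?_⟩
    · rw [top_append, top_delAll, top_insAll, List.append_nil]; exact Eqv.refl _
    · rw [bot_append, bot_delAll, bot_insAll]; exact Eqv.refl _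
    · simp [acost_append, del0, ins0]
  | cons m M ih =>
    obtain ⟨mx, my, t⟩ := m
    simp only [List.mem_cons, forall_eq_or_imp] at h1
    obtain ⟨⟨ht, hx, hy, hx', hy'⟩, h1⟩ := h1
    rw [List.pairwise_cons] at h2
    -- Each string is cut into the parts before, along and after the first segment.
    have cut : ∀ {z k : ℝ} {l : List (α × ℝ)}, Pos l → z ≤ k → k + t ≤ z + eLen l →
        ∃ l1 l2 l3, Pos l1 ∧ Pos l2 ∧ Pos l3 ∧ eLen l1 = k - z ∧ eLen l2 = t ∧
          Eqv (l1 ++ (l2 ++ l3)) l ∧ z + eLen l = k + t + eLen l3 := by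
      intro z k l hl hz hk
      obtain ⟨l1, r, p1, pr, e1, er⟩ := list_split hl (t := k - z) (by linarith) (by linarith)
      have er1 := er.1
      rw [eLen_append] at er1
      obtain ⟨l2, l3, p2, p3, e2, e3⟩ := list_split pr ht.le (by linarith)
      have er3 := e3.1
      rw [eLen_append] at er3
      exact ⟨l1, l2, l3, p1, p2, p3, e1, e2, ((Eqv.refl _).append p1 p1 e3).trans er,
        by linarith⟩
    obtain ⟨u1, u2, u3, pu1, pu2, pu3, lu1, lu2, eu, lu⟩ := cut hu hx hx'
    obtain ⟨v1, v2, v3, pv1, pv2, pv3, lv1, lv2, ev, lv⟩ := cut hv hy hy'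
    have charMid : ∀ {l l1 l2 l3 : List (α × ℝ)} {k s : ℝ}, Pos l1 → Pos l2 →
        Eqv (l1 ++ (l2 ++ l3)) l → eLen l1 = k → eLen l2 = t → 0 ≤ s → s < t →
        charAt l (k + s) = charAt l2 s := by
      intro l l1 l2 l3 k s p1 p2 e e1 e2 h0 hs
      have := p1.eLen_nonneg
      rw [← e.2 _ (by linarith), ← e1, charAt_append_right p1 _ h0,
        charAt_append_left p2 _ h0 (e2 ▸ hs)]
    have charEnd : ∀ {l l1 l2 l3 : List (α × ℝ)} {z k s j : ℝ}, Pos l1 → Pos l2 →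
        Eqv (l1 ++ (l2 ++ l3)) l → eLen l1 = k - z → eLen l2 = t → 0 ≤ s → k + t ≤ j →
        charAt l (j - z + s) = charAt l3 (j - (k + t) + s) := by
      intro l l1 l2 l3 z k s j p1 p2 e e1 e2 h0 hj
      have := p1.eLen_nonneg
      rw [← e.2 _ (by linarith), ← charAt_append_right p2 l3 (by linarith), e2,
        ← charAt_append_right p1 (l2 ++ l3) (by linarith), e1,
        show j - z + s = k - z + (t + (j - (k + t) + s)) by ring]
    obtain ⟨B, b1, b2, b3, b4⟩ := align_full φ pu2 pv2 (lu2.trans lv2.symm)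
    obtain ⟨C, c1, c2, c3, c4⟩ := ih (x := mx + t) (y := my + t) pu3 pv3 (fun m hm => by
      obtain ⟨k1, k2, k3, k4, k5⟩ := h1 m hm
      exact ⟨k1, (h2.1 m hm).1, (h2.1 m hm).2, by linarith, by linarith⟩) h2.2
    refine ⟨delAll u1 ++ (insAll v1 ++ (B ++ C)), ?_, ?_, ?_, ?_⟩
    · simp only [cpos_append]
      exact ⟨cpos_delAll pu1, cpos_insAll pv1, b1, c1⟩
    · simp only [top_append, top_delAll, top_insAll, List.nil_append]
      exact ((Eqv.refl _).append pu1 pu1 (b2.append b1.top pu2 c2)).trans eu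
    · simp only [bot_append, bot_delAll, bot_insAll, List.nil_append]
      exact ((Eqv.refl _).append pv1 pv1 (b3.append b1.bot pv2 c3)).trans ev
    · simp only [acost_append, del0, ins0, List.map_cons, List.sum_cons, zero_add]
      rw [b4, c4, lu2]
      congr 1
      · refine integral_congr_Ico ht.le fun s h0 hs => ?_
        rw [charMid pu1 pu2 eu lu1 lu2 h0 hs, charMid pv1 pv2 ev lv1 lv2 h0 hs]
      · congr 1
        refine List.map_congr_left fun m hm => ?_
        refine integral_congr_Ico (h1 m hm).1.le fun s h0 hs => ?_
        rw [charEnd pu1 pu2 eu lu1 lu2 h0 (h2.1 m hm).1,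
          charEnd pv1 pv2 ev lv1 lv2 h0 (h2.1 m hm).2]

/-- Every matching is realized by an edit sequence of the same cost. -/
lemma edit_of_matching [DecidableEq α] (wdel wins : α → ℝ) (wsub : α → α → ℝ)
    {u v : List (α × ℝ)} (hu : RES u) (hv : RES v) {M : List (ℝ × ℝ × ℝ)}
    (hM : IsMatching (eLen u) (eLen v) M) :
    EditCost wdel wins wsub u v (mCost wdel wins wsub u v M) := by
  obtain ⟨N, hN, hs⟩ := hM.exists_sorted
  have hN1 := fun m hm => hM.1 m (hN.mem_iff.1 hm)
  have hNM := isMatching_of_sorted hN1 hs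
  obtain ⟨A, a1, a2, a3, a4⟩ := align_of_sorted (gain wdel wins wsub) (x := 0) (y := 0) hu.2 hv.2
    (by simpa using hN1) hs
  simp only [sub_zero] at a4
  rw [← mCost_perm wdel wins wsub u v hN, mCost_eq wdel wins wsub hu.2 hv.2 hNM, ← a4,
    ← a2.integral a1.top, ← a3.integral a1.bot, ← acost_eq wdel wins wsub a1]
  exact edit_of_align a1 hu hv a2 a3

end Align
end ExpStr

open ExpStr in
/-- For every exp-edit sequence from `u` to `v` of total cost `c` there is an
exp-matching from `u` to `v` of cost at most `c`; hence the infimum of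
exp-matching costs is at most the infimum of exp-edit sequence costs, and the
two infima coincide. -/
theorem sequence_to_matching {α : Type*} [DecidableEq α] [Inhabited α]
    (wdel wins : α → ℝ) (wsub : α → α → ℝ)
    (hdel : ∀ a, 0 < wdel a) (hins : ∀ a, 0 < wins a)
    (hsub0 : ∀ a, wsub a a = 0) (hsubpos : ∀ a b, a ≠ b → 0 < wsub a b)
    (htri₁ : ∀ a b c, wsub a c ≤ wsub a b + wsub b c)
    (htri₂ : ∀ a b, wsub a b ≤ wdel a + wins b)
    (htri₃ : ∀ a b, wins b ≤ wins a + wsub a b)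
    (htri₄ : ∀ a b, wdel a ≤ wsub a b + wdel b)
    (u v : List (α × ℝ)) (hu : RES u) (hv : RES v) :
    (∀ c : ℝ, EditCost wdel wins wsub u v c →
      ∃ M : List (ℝ × ℝ × ℝ), IsMatching (eLen u) (eLen v) M ∧
        mCost wdel wins wsub u v M ≤ c) ∧
    sInf {c | ∃ M : List (ℝ × ℝ × ℝ),
        IsMatching (eLen u) (eLen v) M ∧ c = mCost wdel wins wsub u v M} ≤
      sInf {c | EditCost wdel wins wsub u v c} ∧
    sInf {c | ∃ M : List (ℝ × ℝ × ℝ),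
        IsMatching (eLen u) (eLen v) M ∧ c = mCost wdel wins wsub u v M} =
      sInf {c | EditCost wdel wins wsub u v c} := by
  have hw : ∀ x y z, wt wdel wins wsub x z ≤ wt wdel wins wsub x y + wt wdel wins wsub y z := by
    rintro (_ | a) (_ | b) (_ | c) <;> simp only [wt]
    · linarith
    · linarith
    · linarith [hins b, hdel b]
    · exact htri₃ b c
    · linarith
    · exact htri₂ a c
    · exact htri₄ a b
    · exact htri₁ a b c
  have main : ∀ c : ℝ, EditCost wdel wins wsub u v c →
      ∃ M : List (ℝ × ℝ × ℝ), IsMatching (eLen u) (eLen v) M ∧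
        mCost wdel wins wsub u v M ≤ c := by
    intro c hc
    obtain ⟨A, a1, a2, a3, a4⟩ := align_of_edit hsub0 hw hu hc
    obtain ⟨M, hM, e⟩ := matching_of_align wdel wins wsub a1 hu.2 hv.2 a2 a3
    exact ⟨M, hM, e.trans_le a4⟩
  have hnil : IsMatching (eLen u) (eLen v) [] := by simp [IsMatching]
  have sub_nonneg' : ∀ a b, 0 ≤ wsub a b := by
    intro a b
    by_cases h : a = b
    · rw [h, hsub0]
    · exact (hsubpos a b h).le
  -- Both infima are over nonempty sets bounded below by `0`.
  have bM : BddBelow {c | ∃ M : List (ℝ × ℝ × ℝ),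
      IsMatching (eLen u) (eLen v) M ∧ c = mCost wdel wins wsub u v M} := by
    refine ⟨0, ?_⟩
    rintro c ⟨M, hM, rfl⟩
    refine add_nonneg (add_nonneg ?_ ?_) (List.sum_nonneg ?_)
    · exact MeasureTheory.integral_nonneg fun x => (hdel _).le
    · exact MeasureTheory.integral_nonneg fun x => (hins _).le
    · intro r hr
      obtain ⟨m, hm, rfl⟩ := List.mem_map.1 hr
      exact intervalIntegral.integral_nonneg (hM.1 m hm).1.le fun s _ => sub_nonneg' _ _
  have bE : BddBelow {c | EditCost wdel wins wsub u v c} := by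
    obtain ⟨b, hb⟩ := bM
    refine ⟨b, fun c hc => ?_⟩
    obtain ⟨M, hM, h⟩ := main c hc
    exact (hb ⟨M, hM, rfl⟩).trans h
  have le1 : sInf {c | ∃ M : List (ℝ × ℝ × ℝ),
      IsMatching (eLen u) (eLen v) M ∧ c = mCost wdel wins wsub u v M} ≤
      sInf {c | EditCost wdel wins wsub u v c} := by
    refine le_csInf ⟨_, edit_of_matching wdel wins wsub hu hv hnil⟩ fun c hc => ?_
    obtain ⟨M, hM, h⟩ := main c hc
    exact (csInf_le bM ⟨M, hM, rfl⟩).trans h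
  refine ⟨main, le1, le_antisymm le1 ?_⟩
  refine le_csInf ⟨_, [], hnil, rfl⟩ ?_
  rintro c ⟨M, hM, rfl⟩
  exact csInf_le bE (edit_of_matching wdel wins wsub hu hv hM)
end

section
/- If p₁ and p₂ are ℕ-exponent-strings (i.e., all exponents are positive integers), then the exp-edit distance dist(p₁, p₂) equals the classical string edit distance between the corresponding ordinary strings over Σ. -/
namespace ExpStr

section Cat

/-! ### Concatenation and run-length encoding -/

variable {α : Type*} [DecidableEq α]

lemma rcat_nil_left (q : List (α × ℝ)) : rcat [] q = q := by
  simp [rcat, eCat]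

lemma rcat_nil_right (p : List (α × ℝ)) : rcat p [] = p := by
  unfold rcat eCat
  split <;> simp_all

lemma rcat_snoc_cons (p : List (α × ℝ)) (a b : α) (s t : ℝ) (q : List (α × ℝ)) :
    rcat (p ++ [(a, s)]) ((b, t) :: q) =
      if a = b then p ++ (a, s + t) :: q else p ++ (a, s) :: (b, t) :: q := by
  simp [rcat, eCat]

lemma rcat_single_cons (a b : α) (s t : ℝ) (q : List (α × ℝ)) :
    rcat [(a, s)] ((b, t) :: q) =
      if a = b then (a, s + t) :: q else (a, s) :: (b, t) :: q := by
  simpa using rcat_snoc_cons [] a b s t q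

lemma rcat_cons_snoc (x : α × ℝ) (p : List (α × ℝ)) (y : α × ℝ) (q : List (α × ℝ)) :
    rcat (x :: (p ++ [y])) q = x :: rcat (p ++ [y]) q := by
  obtain ⟨b, t⟩ := y
  cases q with
  | nil => simp [rcat_nil_right]
  | cons z q =>
    obtain ⟨c, u⟩ := z
    rw [← List.cons_append, rcat_snoc_cons, rcat_snoc_cons]
    split <;> simp

lemma rcat_single_assoc (x : α × ℝ) (p q : List (α × ℝ)) :
    rcat [x] (rcat p q) = rcat (rcat [x] p) q := by
  obtain ⟨a, s⟩ := x
  cases q with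
  | nil => simp [rcat_nil_right]
  | cons z q =>
    obtain ⟨c, u⟩ := z
    cases p with
    | nil => simp [rcat_nil_left, rcat_nil_right]
    | cons y p =>
      obtain ⟨b, t⟩ := y
      rcases List.eq_nil_or_concat p with rfl | ⟨p, ⟨d, v⟩, rfl⟩
      · rw [rcat_single_cons b c, rcat_single_cons a b]
        have h1 := rcat_snoc_cons [(a, s)] b c t u q
        simp only [List.cons_append, List.nil_append] at h1
        by_cases hbc : b = c <;> by_cases hab : a = b <;>
          simp_all [rcat_single_cons, add_assoc]
      · rw [List.concat_eq_append]
        rw [rcat_cons_snoc, rcat_single_cons, rcat_single_cons]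
        split
        · rw [rcat_cons_snoc]
        · have := rcat_cons_snoc (a, s) ((b, t) :: p) (d, v) ((c, u) :: q)
          rw [List.cons_append] at this
          rw [this, rcat_cons_snoc]

lemma ofWord_cons (a : α) (w : List α) : ofWord (a :: w) = rcat [(a, 1)] (ofWord w) := rfl

lemma ofWord_append (u v : List α) : ofWord (u ++ v) = rcat (ofWord u) (ofWord v) := by
  induction u with
  | nil => exact (rcat_nil_left _).symm
  | cons a u ih => rw [List.cons_append, ofWord_cons, ih, rcat_single_assoc, ofWord_cons]

lemma res_rcat_single (a : α) (s : ℝ) (hs : 0 < s) (p : List (α × ℝ)) (hp : RES p) :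
    RES (rcat [(a, s)] p) := by
  cases p with
  | nil => rw [rcat_nil_right]; exact ⟨List.isChain_singleton _, by simpa using hs⟩
  | cons y p =>
    obtain ⟨b, t⟩ := y
    obtain ⟨h1, h2⟩ := hp
    have ht : 0 < t := h2 (b, t) (by simp)
    have hp' : ∀ x ∈ p, 0 < x.2 := fun x hx => h2 x (by simp [hx])
    rw [rcat_single_cons]
    split
    · next h =>
      subst h
      refine ⟨?_, ?_⟩
      · cases p with
        | nil => exact List.isChain_singleton _
        | cons z p =>
          unfold IsExp at *
          rw [List.Chain', List.isChain_cons_cons] at *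
          exact h1
      · intro x hx
        rcases List.mem_cons.1 hx with rfl | hx
        · exact add_pos hs ht
        · exact hp' x hx
    · next h =>
      refine ⟨?_, ?_⟩
      · unfold IsExp at *
        rw [List.Chain', List.isChain_cons_cons]
        exact ⟨h, h1⟩
      · intro x hx
        rcases List.mem_cons.1 hx with rfl | hx
        · exact hs
        · exact h2 x hx

lemma res_ofWord (w : List α) : RES (ofWord w) := by
  induction w with
  | nil => exact ⟨List.isChain_nil, by simp [ofWord, eRep]⟩
  | cons a w ih => exact res_rcat_single a 1 one_pos _ ih

end Cat

section Classical

/-! ### The classical edit distance -/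

variable {α : Type*} {wdel wins : α → ℝ} {wsub : α → α → ℝ}

/-- Every classical edit operation is an exp-edit operation with exponent `1`. -/
lemma SEditCost.editCost [DecidableEq α] {u v : List α} {c : ℝ}
    (h : SEditCost wdel wins wsub u v c) :
    EditCost wdel wins wsub (ofWord u) (ofWord v) c := by
  induction h with
  | refl => exact EditCost.refl
  | step _ hs ih =>
    refine EditCost.step ih ?_
    obtain ⟨p₁, p₂, h⟩ := hs
    refine ⟨ofWord p₁, ofWord p₂, res_ofWord _, res_ofWord _, ?_⟩
    rcases h with ⟨a, rfl, rfl, rfl⟩ | ⟨a, rfl, rfl, rfl⟩ | ⟨a, b, rfl, rfl, rfl⟩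
    · exact Or.inl ⟨a, 1, one_pos, ofWord_append _ _, by rw [ofWord_append, ofWord_cons],
        (one_mul _).symm⟩
    · exact Or.inr (Or.inl ⟨a, 1, one_pos, by rw [ofWord_append, ofWord_cons],
        ofWord_append _ _, (one_mul _).symm⟩)
    · exact Or.inr (Or.inr ⟨a, b, 1, one_pos, by rw [ofWord_append, ofWord_cons],
        by rw [ofWord_append, ofWord_cons], (one_mul _).symm⟩)

lemma SEditCost.cons {u v : List α} {c : ℝ} (a : α)
    (h : SEditCost wdel wins wsub u v c) :
    SEditCost wdel wins wsub (a :: u) (a :: v) c := by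
  induction h with
  | refl => exact SEditCost.refl
  | step _ hs ih =>
    refine SEditCost.step ih ?_
    obtain ⟨p₁, p₂, h⟩ := hs
    refine ⟨a :: p₁, p₂, ?_⟩
    rcases h with ⟨b, rfl, rfl, rfl⟩ | ⟨b, rfl, rfl, rfl⟩ | ⟨b, d, rfl, rfl, rfl⟩
    · exact Or.inl ⟨b, rfl, rfl, rfl⟩
    · exact Or.inr (Or.inl ⟨b, rfl, rfl, rfl⟩)
    · exact Or.inr (Or.inr ⟨b, d, rfl, rfl, rfl⟩)

lemma SEditCost.del_cons {u v : List α} {c : ℝ} (a : α)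
    (h : SEditCost wdel wins wsub u v c) :
    SEditCost wdel wins wsub (a :: u) v (c + wdel a) :=
  (h.cons a).step ⟨[], v, Or.inr (Or.inl ⟨a, rfl, rfl, rfl⟩)⟩

lemma SEditCost.ins_cons {u v : List α} {c : ℝ} (b : α)
    (h : SEditCost wdel wins wsub u v c) :
    SEditCost wdel wins wsub u (b :: v) (c + wins b) :=
  h.step ⟨[], v, Or.inl ⟨b, rfl, rfl, rfl⟩⟩

lemma SEditCost.sub_cons {u v : List α} {c : ℝ} (a b : α)
    (h : SEditCost wdel wins wsub u v c) :
    SEditCost wdel wins wsub (a :: u) (b :: v) (c + wsub a b) :=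
  (h.cons a).step ⟨[], v, Or.inr (Or.inr ⟨a, b, rfl, rfl, rfl⟩)⟩

lemma exists_sEditCost (u v : List α) : ∃ c, SEditCost wdel wins wsub u v c := by
  induction u with
  | nil =>
    induction v with
    | nil => exact ⟨0, SEditCost.refl⟩
    | cons b v ih => exact ih.imp' _ fun c h => h.ins_cons b
  | cons a u ih => exact ih.imp' _ fun c h => h.del_cons a

lemma SEditCost.nonneg (hdel : ∀ a, 0 ≤ wdel a) (hins : ∀ a, 0 ≤ wins a)
    (hsub : ∀ a b, 0 ≤ wsub a b) {u v : List α} {c : ℝ}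
    (h : SEditCost wdel wins wsub u v c) : 0 ≤ c := by
  induction h with
  | refl => exact le_rfl
  | step _ hs ih =>
    obtain ⟨p₁, p₂, h⟩ := hs
    rcases h with ⟨b, -, -, rfl⟩ | ⟨b, -, -, rfl⟩ | ⟨b, d, -, -, rfl⟩
    · exact add_nonneg ih (hins b)
    · exact add_nonneg ih (hdel b)
    · exact add_nonneg ih (hsub b d)

variable (hdel : ∀ a, 0 ≤ wdel a) (hins : ∀ a, 0 ≤ wins a) (hsub : ∀ a b, 0 ≤ wsub a b)
include hdel hins hsub

lemma sDist_le_of_sEditCost {u v : List α} {c : ℝ} (h : SEditCost wdel wins wsub u v c) :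
    sDist wdel wins wsub u v ≤ c :=
  csInf_le ⟨0, fun _ h' => SEditCost.nonneg hdel hins hsub h'⟩ h

/-- An extension of edit sequences by cost `k` bounds the increase of the edit distance. -/
lemma sDist_le_add {u v u' v' : List α} {k : ℝ}
    (h : ∀ c, SEditCost wdel wins wsub u v c → SEditCost wdel wins wsub u' v' (c + k)) :
    sDist wdel wins wsub u' v' ≤ sDist wdel wins wsub u v + k := by
  rw [← sub_le_iff_le_add]
  refine le_csInf (exists_sEditCost u v) fun c hc => ?_
  have := sDist_le_of_sEditCost hdel hins hsub (h c hc)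
  linarith

end Classical

section Alignment

/-! ### Fractional alignments with a fixed word -/

variable {α : Type*} (wdel wins : α → ℝ) (wsub : α → α → ℝ) (w : List α)

/-- The interval `[x, x + d]` lies in a unit cell of `w` carrying the letter `a`. -/
def InCell (w : List α) (x d : ℝ) (a : α) : Prop :=
  0 ≤ d ∧ ∃ i : ℕ, (i : ℝ) ≤ x ∧ x + d ≤ i + 1 ∧ w[i]? = some a

/-- `Trace … b P q x c`: starting with the pointer `x` in `w`, one can produce `b^q` by
fractional deletions, insertions and substitutions and continue in `P`, at total cost `c`. Each
move stays inside one unit cell of `w`. -/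
inductive Trace (b : α) (P : ℝ → ℝ → Prop) : ℝ → ℝ → ℝ → Prop
  | base {x c : ℝ} : P x c → Trace b P 0 x c
  | del {q x c : ℝ} (d : ℝ) (a : α) : InCell w x d a → Trace b P q (x + d) c →
      Trace b P q x (c + d * wdel a)
  | ins {q x c : ℝ} (d : ℝ) : 0 ≤ d → Trace b P q x c → Trace b P (q + d) x (c + d * wins b)
  | sub {q x c : ℝ} (d : ℝ) (a : α) : InCell w x d a → Trace b P q (x + d) c →
      Trace b P (q + d) x (c + d * wsub a b)

/-- The action of a list of letter powers on predicates of pointer and cost: `Align … P u x c` says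
that the part of `w` after `x` can be aligned with `u`, followed by `P`, at cost `c`. -/
def Align (P : ℝ → ℝ → Prop) : List (α × ℝ) → ℝ → ℝ → Prop
  | [] => P
  | (b, q) :: u => Trace wdel wins wsub w b (Align P u) q

/-- Predicates that allow additional cost and additional deletions. -/
structure Closed (P : ℝ → ℝ → Prop) : Prop where
  up : ∀ {x c c' : ℝ}, P x c → c ≤ c' → P x c'
  del : ∀ {x d c : ℝ} {a : α}, InCell w x d a → P (x + d) c → P x (c + d * wdel a)

variable {wdel wins wsub w}

lemma Trace.up {b : α} {P : ℝ → ℝ → Prop} (hP : Closed wdel w P) {q x c : ℝ}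
    (h : Trace wdel wins wsub w b P q x c) :
    ∀ c', c ≤ c' → Trace wdel wins wsub w b P q x c' := by
  induction h with
  | base h => exact fun c' hc => .base (hP.up h hc)
  | @del q x c d a hi _ ih =>
    intro c' hc
    have := Trace.del d a hi (ih (c' - d * wdel a) (by linarith))
    simpa using this
  | @ins q x c d hd _ ih =>
    intro c' hc
    have := Trace.ins d hd (ih (c' - d * wins b) (by linarith))
    simpa using this
  | @sub q x c d a hi _ ih =>
    intro c' hc
    have := Trace.sub d a hi (ih (c' - d * wsub a b) (by linarith))
    simpa using this

lemma closed_align {P : ℝ → ℝ → Prop} (hP : Closed wdel w P) (u : List (α × ℝ)) :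
    Closed wdel w (Align wdel wins wsub w P u) := by
  induction u with
  | nil => exact hP
  | cons y u ih => exact ⟨fun h hc => Trace.up ih h _ hc, fun hi h => Trace.del _ _ hi h⟩

lemma trace_merge {b : α} {P : ℝ → ℝ → Prop} {q q' x c : ℝ}
    (h : Trace wdel wins wsub w b (Trace wdel wins wsub w b P q') q x c) :
    Trace wdel wins wsub w b P (q + q') x c := by
  induction h with
  | base h => simpa using h
  | del d a hi _ ih => exact .del d a hi ih
  | ins d hd _ ih =>
    rw [add_right_comm]
    exact .ins d hd ih
  | sub d a hi _ ih =>
    rw [add_right_comm]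
    exact .sub d a hi ih

/-- A move that crosses the output length `q` is cut in two at that point. -/
lemma trace_split {b : α} {P : ℝ → ℝ → Prop} {r x c : ℝ}
    (h : Trace wdel wins wsub w b P r x c) :
    ∀ q q' : ℝ, 0 ≤ q → 0 ≤ q' → r = q + q' →
      Trace wdel wins wsub w b (Trace wdel wins wsub w b P q') q x c := by
  induction h with
  | base h =>
    intro q q' hq hq' he
    obtain rfl : q = 0 := by linarith
    obtain rfl : q' = 0 := by linarith
    exact .base (.base h)
  | del d a hi _ ih => exact fun q q' hq hq' he => .del d a hi (ih q q' hq hq' he)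
  | @ins r x c d hd h ih =>
    intro q q' hq hq' he
    rcases le_or_gt d q with hdq | hdq
    · have := Trace.ins d hd (ih (q - d) q' (by linarith) hq' (by linarith))
      simpa using this
    · have h1 := Trace.ins (d - q) (by linarith) h
      rw [show r + (d - q) = q' by linarith] at h1
      have h2 := Trace.ins (wdel := wdel) (wins := wins) (wsub := wsub) (w := w) (b := b)
        q hq (.base h1)
      convert h2 using 1 <;> ring
  | @sub r x c d a hi h ih =>
    intro q q' hq hq' he
    rcases le_or_gt d q with hdq | hdq
    · have := Trace.sub d a hi (ih (q - d) q' (by linarith) hq' (by linarith))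
      simpa using this
    · obtain ⟨hd, i, hi1, hi2, hia⟩ := hi
      have h1 : Trace wdel wins wsub w b P (r + (d - q)) (x + q) (c + (d - q) * wsub a b) :=
        Trace.sub (d - q) a ⟨by linarith, i, by linarith, by linarith, hia⟩
          (by rwa [show x + q + (d - q) = x + d by ring])
      rw [show r + (d - q) = q' by linarith] at h1
      have h2 := Trace.sub (wdel := wdel) (wins := wins) (wsub := wsub) (w := w) (b := b)
        q a ⟨hq, i, hi1, by linarith, hia⟩ (.base h1)
      convert h2 using 1 <;> ring

lemma Trace.map {b : α} {P Q : ℝ → ℝ → Prop} {k : ℝ} (hPQ : ∀ x c, P x c → Q x (c + k))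
    {q x c : ℝ} (h : Trace wdel wins wsub w b P q x c) :
    Trace wdel wins wsub w b Q q x (c + k) := by
  induction h with
  | base h => exact .base (hPQ _ _ h)
  | del d a hi _ ih => rw [add_right_comm]; exact .del d a hi ih
  | ins d hd _ ih => rw [add_right_comm]; exact .ins d hd ih
  | sub d a hi _ ih => rw [add_right_comm]; exact .sub d a hi ih

lemma align_append_map {P : ℝ → ℝ → Prop} {u v : List (α × ℝ)} {k : ℝ}
    (huv : ∀ x c, Align wdel wins wsub w P u x c → Align wdel wins wsub w P v x (c + k))
    (p : List (α × ℝ)) : ∀ x c, Align wdel wins wsub w P (p ++ u) x c →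
      Align wdel wins wsub w P (p ++ v) x (c + k) := by
  induction p with
  | nil => exact huv
  | cons y p ih => exact fun x c h => Trace.map ih h

lemma align_append_congr {P : ℝ → ℝ → Prop} {u v : List (α × ℝ)}
    (huv : ∀ x c, Align wdel wins wsub w P u x c ↔ Align wdel wins wsub w P v x c)
    (p : List (α × ℝ)) (x c : ℝ) : Align wdel wins wsub w P (p ++ u) x c ↔
      Align wdel wins wsub w P (p ++ v) x c := by
  constructor <;> intro h
  · simpa using align_append_map (k := 0) (fun x c h => by simpa using (huv x c).1 h) p x c h
  · simpa using align_append_map (k := 0) (fun x c h => by simpa using (huv x c).2 h) p x c h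

/-- Alignments do not see the merging of equal letters at the boundary of a concatenation. -/
lemma align_rcat [DecidableEq α] {P : ℝ → ℝ → Prop} {p q : List (α × ℝ)}
    (hp : ∀ y ∈ p, 0 < y.2) (hq : ∀ y ∈ q, 0 < y.2) (x c : ℝ) :
    Align wdel wins wsub w P (rcat p q) x c ↔ Align wdel wins wsub w P (p ++ q) x c := by
  rcases List.eq_nil_or_concat p with rfl | ⟨p, ⟨a, s⟩, rfl⟩
  · rw [rcat_nil_left, List.nil_append]
  rw [List.concat_eq_append] at *
  cases q with
  | nil => rw [rcat_nil_right, List.append_nil]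
  | cons y q =>
    obtain ⟨b, t⟩ := y
    rw [rcat_snoc_cons]
    split
    · next h =>
      subst h
      rw [List.append_assoc]
      refine align_append_congr (u := (a, s + t) :: q) (v := (a, s) :: (a, t) :: q)
        (fun x c => ⟨fun h => ?_, fun h => trace_merge h⟩) p x c
      exact trace_split h s t (hp (a, s) (by simp)).le (hq (a, t) (by simp)).le rfl
    · rw [List.append_assoc]; rfl

lemma align_ofWord [DecidableEq α] {P : ℝ → ℝ → Prop} (v : List α) : ∀ x c : ℝ,
    Align wdel wins wsub w P (ofWord v) x c ↔
      Align wdel wins wsub w P (v.map fun a => (a, (1 : ℝ))) x c := by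
  induction v with
  | nil => exact fun x c => Iff.rfl
  | cons a v ih =>
    intro x c
    rw [ofWord_cons, align_rcat (by simp) (res_ofWord v).2]
    exact align_append_congr ih [(a, 1)] x c

lemma trace_ins {b : α} {P : ℝ → ℝ → Prop} {q : ℝ} (hq : 0 ≤ q) (x c : ℝ) (h : P x c) :
    Trace wdel wins wsub w b P q x (c + q * wins b) := by
  have := Trace.ins (wdel := wdel) (wins := wins) (wsub := wsub) (w := w) (b := b) q hq (.base h)
  simpa using this

/-- Removing the letter power `b^q` from an alignment: what was substituted by `b` is deleted
instead, and what was inserted disappears. -/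
lemma trace_del (hdel : ∀ a, 0 ≤ wdel a) (hins : ∀ a, 0 ≤ wins a)
    (htri₄ : ∀ a b, wdel a ≤ wsub a b + wdel b)
    {b : α} {P : ℝ → ℝ → Prop} (hP : Closed wdel w P) {q x c : ℝ}
    (h : Trace wdel wins wsub w b P q x c) : P x (c + q * wdel b) := by
  induction h with
  | base h => simpa using h
  | @del q x c d a hi _ ih =>
    rw [add_right_comm]
    exact hP.del hi ih
  | @ins q x c d hd _ ih =>
    refine hP.up ih ?_
    nlinarith [mul_nonneg hd (hins b), mul_nonneg hd (hdel b)]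
  | @sub q x c d a hi _ ih =>
    refine hP.up (hP.del hi ih) ?_
    nlinarith [mul_le_mul_of_nonneg_left (htri₄ a b) hi.1]

lemma trace_sub (htri₁ : ∀ a b c, wsub a c ≤ wsub a b + wsub b c)
    (htri₃ : ∀ a b, wins b ≤ wins a + wsub a b)
    {a b : α} {P : ℝ → ℝ → Prop} (hP : Closed wdel w P) {q x c : ℝ}
    (h : Trace wdel wins wsub w a P q x c) :
    Trace wdel wins wsub w b P q x (c + q * wsub a b) := by
  induction h with
  | base h => simpa using Trace.base h
  | @del q x c d e hi _ ih =>
    rw [add_right_comm]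
    exact .del d e hi ih
  | @ins q x c d hd _ ih =>
    refine (Trace.ins d hd ih).up hP _ ?_
    nlinarith [mul_le_mul_of_nonneg_left (htri₃ a b) hd]
  | @sub q x c d e hi _ ih =>
    refine (Trace.sub d e hi ih).up hP _ ?_
    nlinarith [mul_le_mul_of_nonneg_left (htri₁ e a b) hi.1]

/-- An exp-edit step raises the cost of an alignment by at most the cost of the step. -/
lemma align_step_s10 [DecidableEq α] (hdel : ∀ a, 0 ≤ wdel a) (hins : ∀ a, 0 ≤ wins a)
    (htri₁ : ∀ a b c, wsub a c ≤ wsub a b + wsub b c)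
    (htri₃ : ∀ a b, wins b ≤ wins a + wsub a b)
    (htri₄ : ∀ a b, wdel a ≤ wsub a b + wdel b)
    {P : ℝ → ℝ → Prop} (hP : Closed wdel w P) {u v : List (α × ℝ)} {k : ℝ}
    (hs : Step wdel wins wsub u v k) {x c : ℝ}
    (h : Align wdel wins wsub w P u x c) : Align wdel wins wsub w P v x (c + k) := by
  obtain ⟨p₁, p₂, h₁, h₂, hs⟩ := hs
  have key : ∀ (a : α) (q : ℝ), 0 < q → ∀ x c,
      (Align wdel wins wsub w P (rcat p₁ (rcat [(a, q)] p₂)) x c ↔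
        Align wdel wins wsub w P (p₁ ++ (a, q) :: p₂) x c) := by
    intro a q hq x c
    rw [align_rcat h₁.2 (res_rcat_single a q hq p₂ h₂).2]
    exact align_append_congr (align_rcat (by simpa using hq) h₂.2) p₁ x c
  have hC := closed_align (wins := wins) (wsub := wsub) hP p₂
  rcases hs with ⟨a, q, hq, rfl, rfl, rfl⟩ | ⟨a, q, hq, rfl, rfl, rfl⟩ |
    ⟨a, b, q, hq, rfl, rfl, rfl⟩
  · rw [key a q hq]
    rw [align_rcat h₁.2 h₂.2] at h
    exact align_append_map (u := p₂) (v := (a, q) :: p₂)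
      (fun x c h => trace_ins hq.le x c h) p₁ x c h
  · rw [key a q hq] at h
    rw [align_rcat h₁.2 h₂.2]
    exact align_append_map (u := (a, q) :: p₂) (v := p₂)
      (fun x c h => trace_del hdel hins htri₄ hC h) p₁ x c h
  · rw [key a q hq] at h
    rw [key b q hq]
    exact align_append_map (u := (a, q) :: p₂) (v := (b, q) :: p₂)
      (fun x c h => trace_sub htri₁ htri₃ hC h) p₁ x c h

end Alignment

section Interpolation

/-! ### Piecewise linear interpolation of the classical distance -/

/-- The piecewise linear interpolation on the unit square with lower corner `(i, 0)`, cut along its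
main diagonal; `f` gives the values on the side `t = 0` and `g` those on the side `t = 1`. -/
noncomputable def cell (f g : ℕ → ℝ) (i : ℕ) (x t : ℝ) : ℝ :=
  (1 - max (x - i) t) * f i + (x - i - min (x - i) t) * f (i + 1) +
    (t - min (x - i) t) * g i + min (x - i) t * g (i + 1)

/-- Linear interpolation of `f` on `[i, i + 1]`. -/
noncomputable def lin (f : ℕ → ℝ) (i : ℕ) (x : ℝ) : ℝ :=
  (1 - (x - i)) * f i + (x - i) * f (i + 1)

lemma cell_zero {f g : ℕ → ℝ} {i : ℕ} {x : ℝ} (h : (i : ℝ) ≤ x) :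
    cell f g i x 0 = lin f i x := by
  rw [cell, lin, max_eq_left (by linarith), min_eq_right (by linarith)]
  ring

lemma cell_one {f g : ℕ → ℝ} {i : ℕ} {x : ℝ} (h : x ≤ i + 1) :
    cell f g i x 1 = lin g i x := by
  rw [cell, lin, max_eq_right (by linarith), min_eq_left (by linarith)]
  ring

lemma cell_succ {f g : ℕ → ℝ} {i : ℕ} {t : ℝ} (h0 : 0 ≤ t) (h1 : t ≤ 1) :
    cell f g i ((i + 1 : ℕ) : ℝ) t = cell f g (i + 1) ((i + 1 : ℕ) : ℝ) t := by
  have e : (((i + 1 : ℕ) : ℝ) - i) = 1 := by push_cast; ring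
  rw [cell, cell, e, sub_self, max_eq_left h1, max_eq_right h0, min_eq_right h1, min_eq_left h0]
  ring

/-- Two unit cells that share a position `x` give the same value there. -/
lemma cell_congr {f g : ℕ → ℝ} {i j : ℕ} {x t : ℝ} (h0 : 0 ≤ t) (h1 : t ≤ 1)
    (hi : (i : ℝ) ≤ x) (hi' : x ≤ i + 1) (hj : (j : ℝ) ≤ x) (hj' : x ≤ j + 1) :
    cell f g i x t = cell f g j x t := by
  have hij : i ≤ j + 1 := by
    have : (i : ℝ) ≤ ((j + 1 : ℕ) : ℝ) := by push_cast; linarith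
    exact_mod_cast this
  have hji : j ≤ i + 1 := by
    have : (j : ℝ) ≤ ((i + 1 : ℕ) : ℝ) := by push_cast; linarith
    exact_mod_cast this
  rcases (by omega : i = j ∨ i = j + 1 ∨ j = i + 1) with rfl | rfl | rfl
  · rfl
  · obtain rfl : x = ((j + 1 : ℕ) : ℝ) := le_antisymm (by push_cast; linarith) hi
    exact (cell_succ h0 h1).symm
  · obtain rfl : x = ((i + 1 : ℕ) : ℝ) := le_antisymm (by push_cast; linarith) hj
    exact cell_succ h0 h1

lemma lin_congr {f : ℕ → ℝ} {i j : ℕ} {x : ℝ}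
    (hi : (i : ℝ) ≤ x) (hi' : x ≤ i + 1) (hj : (j : ℝ) ≤ x) (hj' : x ≤ j + 1) :
    lin f i x = lin f j x := by
  rw [← cell_zero (g := f) hi, ← cell_zero (g := f) hj]
  exact cell_congr le_rfl zero_le_one hi hi' hj hj'

/-- Increasing one argument by `d` splits `d` between the maximum and the minimum. -/
lemma max_min_increment (s t d : ℝ) (hd : 0 ≤ d) :
    ∃ m n, 0 ≤ m ∧ 0 ≤ n ∧ m + n = d ∧ max (s + d) t = max s t + m ∧
      min (s + d) t = min s t + n := by
  refine ⟨max (s + d) t - max s t, min (s + d) t - min s t, ?_, ?_, ?_, by ring, by ring⟩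
  · exact sub_nonneg.2 (max_le_max_right t (by linarith))
  · exact sub_nonneg.2 (min_le_min_right t (by linarith))
  · linarith [max_add_min (s + d) t, max_add_min s t]

lemma cell_del {f g : ℕ → ℝ} {i : ℕ} {k x t d : ℝ} (hd : 0 ≤ d)
    (hf : f i ≤ f (i + 1) + k) (hg : g i ≤ g (i + 1) + k) :
    cell f g i x t ≤ cell f g i (x + d) t + d * k := by
  obtain ⟨m, n, hm, hn, hmn, e1, e2⟩ := max_min_increment (x - i) t d hd
  rw [cell, cell, show x + d - (i : ℝ) = x - i + d by ring, e1, e2, ← hmn]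
  nlinarith [mul_le_mul_of_nonneg_left hf hm, mul_le_mul_of_nonneg_left hg hn]

lemma cell_ins {f g : ℕ → ℝ} {i : ℕ} {k x t d : ℝ} (hd : 0 ≤ d)
    (h : ∀ i, f i ≤ g i + k) :
    cell f g i x t ≤ cell f g i x (t + d) + d * k := by
  obtain ⟨m, n, hm, hn, hmn, e1, e2⟩ := max_min_increment t (x - i) d hd
  rw [max_comm, max_comm t] at e1
  rw [min_comm, min_comm t] at e2
  rw [cell, cell, e1, e2, ← hmn]
  nlinarith [mul_le_mul_of_nonneg_left (h i) hm, mul_le_mul_of_nonneg_left (h (i + 1)) hn]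

lemma cell_sub {f g : ℕ → ℝ} {i : ℕ} {k x t d : ℝ} (hd : 0 ≤ d)
    (h : f i ≤ g (i + 1) + k) :
    cell f g i x t ≤ cell f g i (x + d) (t + d) + d * k := by
  rw [cell, cell, show x + d - (i : ℝ) = x - i + d by ring, max_add_add_right,
    min_add_add_right]
  nlinarith [mul_le_mul_of_nonneg_left h hd]

variable {α : Type*} {wdel wins : α → ℝ} {wsub : α → α → ℝ} {w : List α}

lemma trace_nonneg {b : α} {P : ℝ → ℝ → Prop} {q x c : ℝ}
    (h : Trace wdel wins wsub w b P q x c) : 0 ≤ q := by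
  induction h with
  | base h => exact le_rfl
  | del d a hi _ ih => exact ih
  | ins d hd _ ih => exact add_nonneg ih hd
  | sub d a hi _ ih => exact add_nonneg ih hi.1

/-- Along a trace producing at most one letter `b`, the interpolation between `f` (before the
letter) and `g` (after it) decreases by no more than the cost. With output `b^q` still to be
produced, the height in the unit square is `1 - q`. -/
lemma trace_cell {b : α} {f g : ℕ → ℝ} {P : ℝ → ℝ → Prop}
    (hP : ∀ x c, P x c → ∀ i : ℕ, (i : ℝ) ≤ x → x ≤ i + 1 → lin g i x ≤ c)
    (hfdel : ∀ i a, w[i]? = some a → f i ≤ f (i + 1) + wdel a)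
    (hgdel : ∀ i a, w[i]? = some a → g i ≤ g (i + 1) + wdel a)
    (hins : ∀ i, f i ≤ g i + wins b)
    (hsub : ∀ i a, w[i]? = some a → f i ≤ g (i + 1) + wsub a b)
    {q x c : ℝ} (h : Trace wdel wins wsub w b P q x c) :
    q ≤ 1 → ∀ i : ℕ, (i : ℝ) ≤ x → x ≤ i + 1 → cell f g i x (1 - q) ≤ c := by
  induction h with
  | base h =>
    intro _ i hi hi'
    rw [sub_zero, cell_one hi']
    exact hP _ _ h i hi hi'
  | @del q x c d a hc h ih =>
    intro hq j hj hj'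
    obtain ⟨hd, i, hi, hi', hia⟩ := hc
    have h0 := trace_nonneg h
    rw [cell_congr (by linarith) (by linarith) hj hj' hi (by linarith)]
    exact (cell_del hd (hfdel i a hia) (hgdel i a hia)).trans
      (by linarith [ih hq i (by linarith) hi'])
  | @ins q x c d hd h ih =>
    intro hq j hj hj'
    have e := cell_ins (i := j) (x := x) (t := 1 - (q + d)) hd hins
    rw [show 1 - (q + d) + d = 1 - q by ring] at e
    exact e.trans (by linarith [ih (by linarith) j hj hj'])
  | @sub q x c d a hc h ih =>
    intro hq j hj hj'
    obtain ⟨hd, i, hi, hi', hia⟩ := hc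
    have h0 := trace_nonneg h
    rw [cell_congr (by linarith) (by linarith) hj hj' hi (by linarith)]
    have e := cell_sub (x := x) (t := 1 - (q + d)) hd (hsub i a hia)
    rw [show 1 - (q + d) + d = 1 - q by ring] at e
    exact e.trans (by linarith [ih (by linarith) i (by linarith) hi'])

end Interpolation

section Bound

/-! ### The lower bound for exp-edit sequences -/

variable {α : Type*} (wdel wins : α → ℝ) (wsub : α → α → ℝ) (w : List α)

/-- The classical distance from `w` without its first `i` letters to `v`. -/
noncomputable def dropDist (v : List α) (i : ℕ) : ℝ := sDist wdel wins wsub (w.drop i) v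

/-- The predicate at which alignments end: when the output is exhausted, the interpolated cost
of deleting the rest of `w` still has to be paid. -/
def EndPred (x c : ℝ) : Prop :=
  ∀ i : ℕ, (i : ℝ) ≤ x → x ≤ i + 1 → lin (dropDist wdel wins wsub w []) i x ≤ c

variable {wdel wins wsub w}
variable (hdel : ∀ a, 0 ≤ wdel a) (hins : ∀ a, 0 ≤ wins a) (hsub : ∀ a b, 0 ≤ wsub a b)

lemma drop_eq_cons {i : ℕ} {a : α} (h : w[i]? = some a) : w.drop i = a :: w.drop (i + 1) := by
  obtain ⟨hi, rfl⟩ := List.getElem?_eq_some_iff.1 h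
  exact List.drop_eq_getElem_cons hi

include hdel hins hsub

lemma dropDist_del (v : List α) (i : ℕ) (a : α) (h : w[i]? = some a) :
    dropDist wdel wins wsub w v i ≤ dropDist wdel wins wsub w v (i + 1) + wdel a := by
  unfold dropDist
  rw [drop_eq_cons h]
  exact sDist_le_add hdel hins hsub fun c hc => hc.del_cons a

lemma dropDist_ins (v : List α) (b : α) (i : ℕ) :
    dropDist wdel wins wsub w (b :: v) i ≤ dropDist wdel wins wsub w v i + wins b :=
  sDist_le_add hdel hins hsub fun _ hc => hc.ins_cons b

lemma dropDist_sub (v : List α) (b : α) (i : ℕ) (a : α) (h : w[i]? = some a) :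
    dropDist wdel wins wsub w (b :: v) i ≤ dropDist wdel wins wsub w v (i + 1) + wsub a b := by
  unfold dropDist
  rw [drop_eq_cons h]
  exact sDist_le_add hdel hins hsub fun c hc => hc.sub_cons a b

lemma closed_endPred : Closed wdel w (EndPred wdel wins wsub w) := by
  refine ⟨fun h hc i hi hi' => (h i hi hi').trans hc, ?_⟩
  rintro x d c a ⟨hd, i, hi, hi', hia⟩ h j hj hj'
  rw [lin_congr hj hj' hi (by linarith),
    ← cell_zero (g := dropDist wdel wins wsub w []) hi]
  have := dropDist_del hdel hins hsub [] i a hia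
  refine (cell_del hd this this).trans ?_
  rw [cell_zero (by linarith)]
  linarith [h i (by linarith) hi']

lemma endPred_length : EndPred wdel wins wsub w (w.length : ℝ) 0 := by
  intro i hi hi'
  rw [lin_congr hi hi' le_rfl (by linarith), lin, sub_self]
  have : dropDist wdel wins wsub w [] w.length ≤ 0 := by
    unfold dropDist
    rw [List.drop_length]
    exact sDist_le_of_sEditCost hdel hins hsub SEditCost.refl
  linarith

/-- The identical alignment of the rest of `w` with itself costs nothing. -/
lemma align_self (hsub0 : ∀ a, wsub a a = 0) (l : List α) :
    ∀ k : ℕ, k ≤ w.length → w.drop k = l →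
      Align wdel wins wsub w (EndPred wdel wins wsub w) (l.map fun a => (a, (1 : ℝ))) k 0 := by
  induction l with
  | nil =>
    intro k hk h
    obtain rfl : k = w.length := le_antisymm hk (List.drop_eq_nil_iff.1 h)
    exact endPred_length hdel hins hsub
  | cons a l ih =>
    intro k hk h
    have hk' : k < w.length := by
      by_contra hc
      rw [List.drop_eq_nil_iff.2 (not_lt.1 hc)] at h
      cases h
    rw [List.drop_eq_getElem_cons hk'] at h
    obtain ⟨h1, h2⟩ := List.cons_eq_cons.1 h
    have hi := ih (k + 1) hk' h2
    have hc : InCell w (k : ℝ) 1 a :=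
      ⟨zero_le_one, k, le_rfl, le_rfl, List.getElem?_eq_some_iff.2 ⟨hk', h1⟩⟩
    push_cast at hi
    have := Trace.sub (wdel := wdel) (wins := wins) (wsub := wsub) (b := a) 1 a hc (.base hi)
    simpa [hsub0, Align] using this

/-- The interpolated classical distance is a lower bound for the cost of fractional alignments. -/
lemma lin_le_of_align (v : List α) : ∀ x c : ℝ,
    Align wdel wins wsub w (EndPred wdel wins wsub w) (v.map fun a => (a, (1 : ℝ))) x c →
      ∀ i : ℕ, (i : ℝ) ≤ x → x ≤ i + 1 → lin (dropDist wdel wins wsub w v) i x ≤ c := by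
  induction v with
  | nil => exact fun x c h => h
  | cons b v ih =>
    intro x c h i hi hi'
    have := trace_cell ih (dropDist_del hdel hins hsub (b :: v)) (dropDist_del hdel hins hsub v)
      (dropDist_ins hdel hins hsub v b) (dropDist_sub hdel hins hsub v b) h le_rfl i hi hi'
    rwa [sub_self, cell_zero hi] at this

end Bound

end ExpStr

open ExpStr in
/-- For `ℕ`-exponent-strings (identified with ordinary strings via run-length
encoding), the exp-edit distance equals the classical string edit distance. -/
theorem eDist_eq_sDist {α : Type*} [DecidableEq α]
    (wdel wins : α → ℝ) (wsub : α → α → ℝ)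
    (hdel : ∀ a, 0 < wdel a) (hins : ∀ a, 0 < wins a)
    (hsub0 : ∀ a, wsub a a = 0) (hsubpos : ∀ a b, a ≠ b → 0 < wsub a b)
    (htri₁ : ∀ a b c, wsub a c ≤ wsub a b + wsub b c)
    (htri₂ : ∀ a b, wsub a b ≤ wdel a + wins b)
    (htri₃ : ∀ a b, wins b ≤ wins a + wsub a b)
    (htri₄ : ∀ a b, wdel a ≤ wsub a b + wdel b)
    (w₁ w₂ : List α) :
    eDist wdel wins wsub (ofWord w₁) (ofWord w₂) =
      sDist wdel wins wsub w₁ w₂ := by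
  have hdel' : ∀ a, 0 ≤ wdel a := fun a => (hdel a).le
  have hins' : ∀ a, 0 ≤ wins a := fun a => (hins a).le
  have hsub' : ∀ a b, 0 ≤ wsub a b := fun a b => by
    by_cases h : a = b
    · rw [h, hsub0]
    · exact (hsubpos a b h).le
  have hlow : ∀ c, EditCost wdel wins wsub (ofWord w₁) (ofWord w₂) c →
      sDist wdel wins wsub w₁ w₂ ≤ c := by
    intro c hc
    have halign : ∀ u c, EditCost wdel wins wsub (ofWord w₁) u c →
        Align wdel wins wsub w₁ (EndPred wdel wins wsub w₁) u 0 c := by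
      intro u c h
      induction h with
      | refl =>
        rw [align_ofWord]
        simpa using align_self hdel' hins' hsub' hsub0 w₁ 0 (Nat.zero_le _) rfl
      | step _ hs ih =>
        exact align_step_s10 hdel' hins' htri₁ htri₃ htri₄ (closed_endPred hdel' hins' hsub') hs ih
    have h := (align_ofWord w₂ _ _).1 (halign _ _ hc)
    have := lin_le_of_align hdel' hins' hsub' w₂ 0 c h 0 (by simp) (by simp)
    simpa [lin, dropDist] using this
  obtain ⟨c₀, h₀⟩ := exists_sEditCost (wdel := wdel) (wins := wins) (wsub := wsub) w₁ w₂
  apply le_antisymm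
  · exact le_csInf ⟨c₀, h₀⟩ fun c hc => csInf_le ⟨_, hlow⟩ (SEditCost.editCost hc)
  · exact le_csInf ⟨c₀, SEditCost.editCost h₀⟩ hlow
end
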